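/- Near-optimal posterior convergence for the empirical Bayes spike and slab LASSO with Cauchy slab: there exist constants C > 0, N_0 > 0 and c_0, c_1 > 0 such that, for any n ≥ N_0 and any s_n satisfying c_1·log²n ≤ s_n ≤ c_0·n, sup_{θ_0 ∈ ℓ0[s_n]} E_{θ_0} ∫ ‖θ − θ_0‖² dΠ_{ĥα}(θ | X) ≤ C·s_n·log n. Moreover, if one only assumes s_n ≤ c_0·n, the same statement holds with the bound replaced by C·(s_n·log n + log³n). -/

import Mathlib

/-!
Statement 3: near-optimal posterior convergence for the empirical Bayes
spike and slab LASSO prior with Cauchy slab.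
-/

open MeasureTheory Real Set

noncomputable section

/-- Standard normal density. -/
def phi (x : ℝ) : ℝ := Real.exp (-x ^ 2 / 2) / Real.sqrt (2 * Real.pi)

/-- Spike inverse-scale `λ₀ = 5√(2π) n`. -/
def lam0 (n : ℕ) : ℝ := 5 * Real.sqrt (2 * Real.pi) * n

/-- Slab scale parameter `λ₁ = 0.05`. -/
def lam1 : ℝ := 0.05

/-- Spike density: Laplace with parameter `λ₀`. -/
def gamma0 (n : ℕ) (x : ℝ) : ℝ := lam0 n / 2 * Real.exp (-(lam0 n) * |x|)

/-- Slab density: Cauchy with scale `1/λ₁`. -/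
def gamma1 (x : ℝ) : ℝ := lam1 / Real.pi * (1 + lam1 ^ 2 * x ^ 2)⁻¹

/-- `g₀ = φ * γ₀`. -/
def g0 (n : ℕ) (x : ℝ) : ℝ := ∫ u, phi (x - u) * gamma0 n u

/-- `g₁ = φ * γ₁`. -/
def g1 (x : ℝ) : ℝ := ∫ u, phi (x - u) * gamma1 u

/-- Posterior weight `a(x) = α g₁(x) / ((1-α) g₀(x) + α g₁(x))`. -/
def aSSL (n : ℕ) (α x : ℝ) : ℝ := α * g1 x / ((1 - α) * g0 n x + α * g1 x)

/-- Single-coordinate SSL posterior `(1-a(x)) G_{0,x} + a(x) G_{1,x}`. -/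
def coordPostSSL (n : ℕ) (α x : ℝ) : Measure ℝ :=
  volume.withDensity fun u => ENNReal.ofReal
    ((1 - aSSL n α x) * (phi (x - u) * gamma0 n u / g0 n x)
      + aSSL n α x * (phi (x - u) * gamma1 u / g1 x))

/-- SSL posterior `Π_α[· | X]` on `ℝⁿ` for fixed `α`. -/
def postSSL (n : ℕ) (α : ℝ) (X : Fin n → ℝ) : Measure (Fin n → ℝ) :=
  Measure.pi fun i => coordPostSSL n α (X i)

/-- Law `P_θ` of the data. -/
def Pdata (n : ℕ) (θ : Fin n → ℝ) : Measure (Fin n → ℝ) :=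
  Measure.pi fun i => ProbabilityTheory.gaussianReal (θ i) 1

/-- The class `ℓ₀[s]` of `s`-sparse vectors. -/
def ell0 (n s : ℕ) : Set (Fin n → ℝ) := {θ | Nat.card {i : Fin n // θ i ≠ 0} ≤ s}

/-- Log-marginal likelihood for the SSL prior. -/
def logMargSSL {n : ℕ} (α : ℝ) (X : Fin n → ℝ) : ℝ :=
  ∑ i, Real.log ((1 - α) * g0 n (X i) + α * g1 (X i))

/-- `hahat` maximises the SSL log-marginal likelihood over `[𝒞 log n / n, 1]`. -/
def IsMMLESSL {n : ℕ} (Ccal : ℝ) (hahat : (Fin n → ℝ) → ℝ) : Prop :=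
  Measurable hahat ∧ ∀ X : Fin n → ℝ, hahat X ∈ Set.Icc (Ccal * Real.log n / n) 1 ∧
    ∀ α ∈ Set.Icc (Ccal * Real.log n / n) 1, logMargSSL α X ≤ logMargSSL (hahat X) X

/-- Expected SSL posterior squared `L²`-moment for the plug-in posterior. -/
def postRiskSSL {n : ℕ} (hahat : (Fin n → ℝ) → ℝ) (θ0 : Fin n → ℝ) : ℝ :=
  ∫ X, (∫ θ, (∑ i, (θ i - θ0 i) ^ 2) ∂(postSSL n (hahat X) X)) ∂(Pdata n θ0)

/-!
Under a product prior the risk is a sum over coordinates. Where `θ₀ i ≠ 0` it is `O(log n)` as soon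
as the weight is at least `1 / n`: beyond `t = √(32 log n)` the slab marginal dominates the spike
marginal, and the posterior follows the observation. Where `θ₀ i = 0` the risk is essentially the
posterior slab weight, whose mean is `O(α t)` for a fixed weight `α`, so the estimated weight must
not exceed `2 α` with `n α` of order `t (s + log n)`. If it does, concavity of the log-likelihood in
the weight makes the likelihood ratio of `2 α` against `α` at least `1`. That ratio factorizes over
the coordinates: a signal contributes a factor at most `2` to its mean, and a noise coordinate a
factor `1 - c α / t + O(1 / n)`, by the mass of the slab marginal on `[t, 2 t]`. Its mean is
therefore `O(n⁻²)`, which absorbs the crude bound `O(1 + x²)` on the risk. When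
`n ≤ (s + log n) log n`, this crude bound alone is enough.
-/

section RealDensities

variable {α : Type*} [MeasurableSpace α] {μ : Measure α} {f : α → ℝ}

lemma integral_withDensity_ofReal (hf : Measurable f) (hf0 : ∀ x, 0 ≤ f x) (g : α → ℝ) :
    ∫ x, g x ∂μ.withDensity (fun x => ENNReal.ofReal (f x)) = ∫ x, f x * g x ∂μ := by
  rw [integral_withDensity_eq_integral_toReal_smul hf.ennreal_ofReal
    (ae_of_all _ fun _ => ENNReal.ofReal_lt_top)]
  simp only [ENNReal.toReal_ofReal (hf0 _), smul_eq_mul]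

lemma integrable_withDensity_ofReal_iff (hf : Measurable f) (hf0 : ∀ x, 0 ≤ f x) {g : α → ℝ} :
    Integrable g (μ.withDensity fun x => ENNReal.ofReal (f x)) ↔
      Integrable (fun x => f x * g x) μ := by
  rw [integrable_withDensity_iff_integrable_smul' hf.ennreal_ofReal
    (ae_of_all _ fun _ => ENNReal.ofReal_lt_top)]
  simp only [ENNReal.toReal_ofReal (hf0 _), smul_eq_mul]

lemma isProbabilityMeasure_withDensity_ofReal (hf0 : ∀ x, 0 ≤ f x) (hf : ∫ x, f x ∂μ = 1) :
    IsProbabilityMeasure (μ.withDensity fun x => ENNReal.ofReal (f x)) := by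
  have hfi : Integrable f μ := Integrable.of_integral_ne_zero (hf ▸ one_ne_zero)
  refine ⟨?_⟩
  rw [withDensity_apply _ MeasurableSet.univ, Measure.restrict_univ,
    ← ofReal_integral_eq_lintegral_ofReal hfi (ae_of_all _ hf0), hf, ENNReal.ofReal_one]

end RealDensities

section StandardNormal

open ProbabilityTheory

lemma phi_pos (x : ℝ) : 0 < phi x := by unfold phi; positivity

lemma continuous_phi : Continuous phi := by unfold phi; fun_prop

lemma measurable_phi : Measurable phi := continuous_phi.measurable

lemma phi_eq_gaussianPDFReal : phi = gaussianPDFReal 0 1 := by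
  ext x
  simp only [phi, gaussianPDFReal, NNReal.coe_one, mul_one, sub_zero, div_eq_inv_mul]

lemma integrable_phi : Integrable phi :=
  phi_eq_gaussianPDFReal ▸ integrable_gaussianPDFReal 0 1

lemma integral_phi : ∫ x, phi x = 1 :=
  phi_eq_gaussianPDFReal ▸ integral_gaussianPDFReal_eq_one 0 one_ne_zero

lemma one_le_sqrt_two_pi : 1 ≤ √(2 * π) := by
  rw [Real.one_le_sqrt]; linarith [Real.pi_gt_three]

lemma phi_le_exp (x : ℝ) : phi x ≤ exp (-x ^ 2 / 2) :=
  div_le_self (exp_pos _).le one_le_sqrt_two_pi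

lemma phi_le_one (x : ℝ) : phi x ≤ 1 :=
  (phi_le_exp x).trans <| exp_le_one_iff.2 (by linarith [sq_nonneg x])

lemma phi_sub (x u : ℝ) : phi (x - u) = phi x * exp (x * u - u ^ 2 / 2) := by
  unfold phi
  rw [div_mul_eq_mul_div, ← Real.exp_add]
  ring_nf

lemma phi_le_phi_of_abs_le {x y : ℝ} (h : |x| ≤ |y|) : phi y ≤ phi x := by
  have := sq_le_sq.2 h
  unfold phi
  gcongr

lemma sq_mul_phi_le_two (w : ℝ) : w ^ 2 * phi w ≤ 2 := by
  calc w ^ 2 * phi w ≤ w ^ 2 * exp (-w ^ 2 / 2) := by gcongr; exact phi_le_exp w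
    _ ≤ 2 := by
      rw [neg_div, Real.exp_neg, ← div_eq_mul_inv, div_le_iff₀ (exp_pos _)]
      linarith [Real.add_one_le_exp (w ^ 2 / 2)]

lemma sq_mul_phi_sub_le {x u : ℝ} (h : 4 * |x| ≤ |u|) : u ^ 2 * phi (x - u) ≤ 4 * phi x := by
  have hexp : u ^ 2 * exp (x * u - u ^ 2 / 2) ≤ 4 := by
    have hxu : x * u ≤ u ^ 2 / 4 := by
      rw [← sq_abs]
      nlinarith [le_abs_self (x * u), abs_mul x u, abs_nonneg u]
    calc u ^ 2 * exp (x * u - u ^ 2 / 2) ≤ u ^ 2 * exp (-(u ^ 2 / 4)) := by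
          gcongr; linarith
      _ ≤ 4 := by
          rw [Real.exp_neg, ← div_eq_mul_inv, div_le_iff₀ (exp_pos _)]
          linarith [Real.add_one_le_exp (u ^ 2 / 4)]
  rw [phi_sub]
  nlinarith [phi_pos x]

lemma gaussianReal_zero_one_eq_withDensity_phi :
    gaussianReal 0 1 = volume.withDensity fun x => ENNReal.ofReal (phi x) := by
  rw [gaussianReal_of_var_ne_zero 0 one_ne_zero, phi_eq_gaussianPDFReal]
  rfl

lemma integral_gaussianReal_zero_one (f : ℝ → ℝ) :
    ∫ x, f x ∂gaussianReal 0 1 = ∫ x, phi x * f x := by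
  rw [gaussianReal_zero_one_eq_withDensity_phi,
    integral_withDensity_ofReal measurable_phi fun x => (phi_pos x).le]

lemma integrable_gaussianReal_zero_one_iff {f : ℝ → ℝ} :
    Integrable f (gaussianReal 0 1) ↔ Integrable fun x => phi x * f x := by
  rw [gaussianReal_zero_one_eq_withDensity_phi,
    integrable_withDensity_ofReal_iff measurable_phi fun x => (phi_pos x).le]

lemma phi_mul_exp_mul_sq (b x : ℝ) :
    phi x * exp (b * x ^ 2) = (√(2 * π))⁻¹ * exp (-(1 / 2 - b) * x ^ 2) := by
  rw [phi, div_eq_inv_mul, mul_assoc, ← Real.exp_add]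
  ring_nf

lemma integrable_exp_mul_sq_gaussianReal {b : ℝ} (hb : b < 1 / 2) :
    Integrable (fun x => exp (b * x ^ 2)) (gaussianReal 0 1) := by
  simp only [integrable_gaussianReal_zero_one_iff, phi_mul_exp_mul_sq]
  exact (integrable_exp_neg_mul_sq (sub_pos.2 hb)).const_mul _

lemma integral_exp_mul_sq_gaussianReal (b : ℝ) :
    ∫ x, exp (b * x ^ 2) ∂gaussianReal 0 1 = √(1 / (1 - 2 * b)) := by
  simp only [integral_gaussianReal_zero_one, phi_mul_exp_mul_sq]
  rw [integral_const_mul, integral_gaussian, ← Real.sqrt_inv, ← Real.sqrt_mul (by positivity)]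
  congr 1
  rw [show 1 - 2 * b = 2 * (1 / 2 - b) by ring]
  field_simp

lemma integral_exp_sq_div_four_gaussianReal_le :
    ∫ x, exp (1 / 4 * x ^ 2) ∂gaussianReal 0 1 ≤ 2 := by
  rw [integral_exp_mul_sq_gaussianReal, Real.sqrt_le_left (by norm_num)]
  norm_num

lemma one_half_le_integral_exp_neg_sq_gaussianReal :
    1 / 2 ≤ ∫ x, exp (-1 * x ^ 2) ∂gaussianReal 0 1 := by
  rw [integral_exp_mul_sq_gaussianReal]
  exact Real.le_sqrt_of_sq_le (by norm_num)

lemma integral_sq_sub_mean_gaussianReal (m : ℝ) :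
    ∫ x, (x - m) ^ 2 ∂gaussianReal m 1 = 1 := by
  have hvar := variance_eq_integral (μ := gaussianReal m 1) aemeasurable_id
  simpa using hvar.symm

lemma integrable_sq_sub_mean_gaussianReal (m : ℝ) :
    Integrable (fun x => (x - m) ^ 2) (gaussianReal m 1) :=
  Integrable.of_integral_ne_zero (integral_sq_sub_mean_gaussianReal m ▸ one_ne_zero)

lemma one_add_sq_le_mul_exp {b : ℝ} (hb : 0 < b) (hb1 : b ≤ 1) (x : ℝ) :
    1 + x ^ 2 ≤ b⁻¹ * exp (b * x ^ 2) := by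
  rw [← div_eq_inv_mul, le_div_iff₀ hb]
  linarith [Real.add_one_le_exp (b * x ^ 2)]

lemma sq_one_add_sq_le_exp (x : ℝ) : (1 + x ^ 2) ^ 2 ≤ 64 * exp (1 / 4 * x ^ 2) := by
  calc (1 + x ^ 2) ^ 2 ≤ ((1 / 8)⁻¹ * exp (1 / 8 * x ^ 2)) ^ 2 := by
        gcongr; exact one_add_sq_le_mul_exp (by norm_num) (by norm_num) x
    _ = 64 * exp (1 / 4 * x ^ 2) := by
        rw [mul_pow, ← Real.exp_nat_mul]; ring_nf

end StandardNormal

section Laplace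

variable {b : ℝ}

lemma integral_exp_neg_mul_abs (hb : 0 < b) : ∫ u : ℝ, exp (-b * |u|) = 2 / b := by
  rw [integral_comp_abs (f := fun u => exp (-b * u)), integral_exp_mul_Ioi (neg_lt_zero.2 hb) 0]
  simp only [mul_zero, Real.exp_zero]
  field_simp

lemma integral_sq_mul_exp_neg_mul_abs (hb : 0 < b) :
    ∫ u : ℝ, u ^ 2 * exp (-b * |u|) = 4 / b ^ 3 := by
  have hGamma : ∫ t in Ioi (0 : ℝ), t ^ 2 * exp (-b * t) = 2 / b ^ 3 := by
    have h := Real.integral_rpow_mul_exp_neg_mul_Ioi (a := 3) (by norm_num) hb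
    have hG : Gamma 3 = 2 := by simp
    norm_num [hG] at h
    simpa [div_eq_inv_mul, neg_mul] using h
  calc ∫ u : ℝ, u ^ 2 * exp (-b * |u|) = ∫ u : ℝ, |u| ^ 2 * exp (-b * |u|) := by
        simp only [sq_abs]
    _ = 4 / b ^ 3 := by
        rw [integral_comp_abs (f := fun u => u ^ 2 * exp (-b * u)), hGamma]
        ring

/-- Density of the (symmetric) Laplace distribution with rate `b`. -/
def laplacePDF (b u : ℝ) : ℝ := b / 2 * exp (-b * |u|)

lemma measurable_laplacePDF (b : ℝ) : Measurable (laplacePDF b) := by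
  unfold laplacePDF; fun_prop

lemma laplacePDF_neg (b u : ℝ) : laplacePDF b (-u) = laplacePDF b u := by
  rw [laplacePDF, laplacePDF, abs_neg]

lemma laplacePDF_le_of_abs_le (hb : 0 < b) {u v : ℝ} (h : |u| ≤ |v|) :
    laplacePDF b v ≤ laplacePDF b u := by
  unfold laplacePDF
  gcongr ?_ * exp ?_
  nlinarith

lemma integral_laplacePDF (hb : 0 < b) : ∫ u, laplacePDF b u = 1 := by
  simp only [laplacePDF]
  rw [integral_const_mul, integral_exp_neg_mul_abs hb]
  field_simp

lemma integral_sq_mul_laplacePDF (hb : 0 < b) : ∫ u, u ^ 2 * laplacePDF b u = 2 / b ^ 2 := by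
  simp only [laplacePDF, mul_left_comm _ (b / 2)]
  rw [integral_const_mul, integral_sq_mul_exp_neg_mul_abs hb]
  field_simp
  norm_num

end Laplace

section Cauchy

lemma gamma1_pos (u : ℝ) : 0 < gamma1 u := by unfold gamma1 lam1; positivity

lemma measurable_gamma1 : Measurable gamma1 := by unfold gamma1; fun_prop

lemma integral_gamma1 : ∫ u, gamma1 u = 1 := by
  have hlam : (0 : ℝ) < lam1 := by norm_num [lam1]
  simp only [gamma1, ← mul_pow]
  rw [integral_const_mul, Measure.integral_comp_mul_left (fun x : ℝ => (1 + x ^ 2)⁻¹) lam1,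
    integral_univ_inv_one_add_sq, abs_of_pos (by positivity), smul_eq_mul]
  field_simp

lemma le_gamma1 (u : ℝ) : 1 / 80 * (1 + u ^ 2)⁻¹ ≤ gamma1 u := by
  unfold gamma1 lam1
  gcongr ?_ * ?_⁻¹
  · rw [le_div_iff₀ pi_pos]; linarith [pi_le_four]
  · nlinarith [sq_nonneg u]

lemma gamma1_le (u : ℝ) : gamma1 u ≤ 7 * (1 + u ^ 2)⁻¹ := by
  have hpi := pi_gt_three
  unfold gamma1 lam1
  rw [← div_eq_mul_inv, ← div_eq_mul_inv, div_div, div_le_div_iff₀ (by positivity) (by positivity)]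
  nlinarith [sq_nonneg u, mul_nonneg (sub_nonneg.2 hpi.le) (sq_nonneg u)]

end Cauchy

section NormalMean

open ProbabilityTheory

/-- Everywhere positive probability densities on `ℝ`, serving as priors on a normal mean. -/
structure IsPriorDensity (γ : ℝ → ℝ) : Prop where
  measurable : Measurable γ
  pos : ∀ u, 0 < γ u
  integral_eq_one : ∫ u, γ u = 1

/-- Marginal density `φ * γ` of an observation `x ~ N(u, 1)` whose mean has prior density `γ`; the
functions `g0 n` and `g1` unfold to instances of it. -/
def gaussConv (γ : ℝ → ℝ) (x : ℝ) : ℝ := ∫ u, phi (x - u) * γ u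

/-- Posterior distribution of the mean of `x ~ N(u, 1)` under the prior density `γ`. -/
def gaussPosterior (γ : ℝ → ℝ) (x : ℝ) : Measure ℝ :=
  volume.withDensity fun u => ENNReal.ofReal (phi (x - u) * γ u / gaussConv γ x)

/-- Posterior mean squared distance to `m` under the prior density `γ`, given `x`. -/
def postSqErr (γ : ℝ → ℝ) (x m : ℝ) : ℝ := ∫ u, (u - m) ^ 2 ∂gaussPosterior γ x

lemma integral_phi_sub_mul (f : ℝ → ℝ) (x : ℝ) :
    ∫ u, phi (x - u) * f u = ∫ w, f (x - w) ∂gaussianReal 0 1 := by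
  rw [integral_gaussianReal_zero_one,
    ← integral_sub_left_eq_self (fun w => phi w * f (x - w)) volume x]
  simp only [sub_sub_cancel]

lemma integrable_phi_sub_mul_iff {f : ℝ → ℝ} {x : ℝ} :
    Integrable (fun u => phi (x - u) * f u) ↔
      Integrable (fun w => f (x - w)) (gaussianReal 0 1) := by
  rw [integrable_gaussianReal_zero_one_iff,
    ← integrable_comp_sub_left (fun w => phi w * f (x - w)) x]
  simp only [sub_sub_cancel]

lemma gaussConv_eq_convolution (γ : ℝ → ℝ) :
    gaussConv γ = convolution γ phi (ContinuousLinearMap.mul ℝ ℝ) volume := by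
  ext x
  simp only [gaussConv, convolution, ContinuousLinearMap.mul_apply', mul_comm]

lemma postSqErr_nonneg (γ : ℝ → ℝ) (x m : ℝ) : 0 ≤ postSqErr γ x m :=
  integral_nonneg fun _ => sq_nonneg _

namespace IsPriorDensity

variable {γ : ℝ → ℝ}

lemma integrable (hγ : IsPriorDensity γ) : Integrable γ :=
  Integrable.of_integral_ne_zero (hγ.integral_eq_one ▸ one_ne_zero)

lemma integrable_phi_sub_mul (hγ : IsPriorDensity γ) (x : ℝ) :
    Integrable fun u => phi (x - u) * γ u := by
  refine hγ.integrable.bdd_mul (c := 1)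
    (measurable_phi.comp (measurable_const.sub measurable_id)).aestronglyMeasurable
    (ae_of_all _ fun u => ?_)
  rw [Real.norm_eq_abs, abs_of_pos (phi_pos _)]
  exact phi_le_one _

lemma integrable_sq_sub_mul (hγ : IsPriorDensity γ) (x m : ℝ) :
    Integrable fun u => (u - m) ^ 2 * (phi (x - u) * γ u) := by
  simp only [← mul_assoc]
  refine hγ.integrable.bdd_mul (c := 2 * (x - m) ^ 2 + 4) ?_ (ae_of_all _ fun u => ?_)
  · have := measurable_phi
    exact Measurable.aestronglyMeasurable (by fun_prop)
  · have hpos := phi_pos (x - u)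
    rw [Real.norm_eq_abs, abs_of_nonneg (by positivity)]
    calc (u - m) ^ 2 * phi (x - u)
        ≤ (2 * (x - m) ^ 2 + 2 * (x - u) ^ 2) * phi (x - u) := by
          gcongr; nlinarith [sq_nonneg ((x - m) + (x - u))]
      _ = 2 * (x - m) ^ 2 * phi (x - u) + 2 * ((x - u) ^ 2 * phi (x - u)) := by ring
      _ ≤ 2 * (x - m) ^ 2 * 1 + 2 * 2 := by
          gcongr
          exacts [phi_le_one _, sq_mul_phi_le_two _]
      _ = 2 * (x - m) ^ 2 + 4 := by ring

lemma gaussConv_pos (hγ : IsPriorDensity γ) (x : ℝ) : 0 < gaussConv γ x := by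
  have hpos : ∀ u, 0 < phi (x - u) * γ u := fun u => mul_pos (phi_pos _) (hγ.pos u)
  rw [gaussConv, integral_pos_iff_support_of_nonneg (fun u => (hpos u).le)
    (hγ.integrable_phi_sub_mul x),
    Function.support_eq_univ fun u => (hpos u).ne']
  simp

lemma measurable_gaussConv (hγ : IsPriorDensity γ) : Measurable (gaussConv γ) := by
  have hmeas : Measurable fun p : ℝ × ℝ => phi (p.1 - p.2) * γ p.2 := by
    have := measurable_phi
    have := hγ.measurable
    fun_prop
  exact hmeas.stronglyMeasurable.integral_prod_right.measurable

lemma integrable_gaussConv (hγ : IsPriorDensity γ) : Integrable (gaussConv γ) :=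
  gaussConv_eq_convolution γ ▸ hγ.integrable.integrable_convolution _ integrable_phi

lemma integral_gaussConv (hγ : IsPriorDensity γ) : ∫ x, gaussConv γ x = 1 := by
  rw [gaussConv_eq_convolution, integral_convolution _ hγ.integrable integrable_phi]
  simp [integral_phi, hγ.integral_eq_one]

lemma measurable_posterior_density (hγ : IsPriorDensity γ) (x : ℝ) :
    Measurable fun u => phi (x - u) * γ u / gaussConv γ x := by
  have := measurable_phi
  have := hγ.measurable
  fun_prop

lemma posterior_density_nonneg (hγ : IsPriorDensity γ) (x u : ℝ) :
    0 ≤ phi (x - u) * γ u / gaussConv γ x :=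
  div_nonneg (mul_pos (phi_pos _) (hγ.pos u)).le (hγ.gaussConv_pos x).le

lemma isProbabilityMeasure_gaussPosterior (hγ : IsPriorDensity γ) (x : ℝ) :
    IsProbabilityMeasure (gaussPosterior γ x) := by
  refine isProbabilityMeasure_withDensity_ofReal (hγ.posterior_density_nonneg x) ?_
  rw [integral_div]
  exact div_self (hγ.gaussConv_pos x).ne'

lemma integrable_sq_sub_gaussPosterior (hγ : IsPriorDensity γ) (x m : ℝ) :
    Integrable (fun u => (u - m) ^ 2) (gaussPosterior γ x) := by
  rw [gaussPosterior, integrable_withDensity_ofReal_iff (hγ.measurable_posterior_density x)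
    (hγ.posterior_density_nonneg x)]
  refine ((hγ.integrable_sq_sub_mul x m).div_const (gaussConv γ x)).congr (ae_of_all _ fun u => ?_)
  simp only
  ring

lemma postSqErr_eq_div (hγ : IsPriorDensity γ) (x m : ℝ) :
    postSqErr γ x m = (∫ u, (u - m) ^ 2 * (phi (x - u) * γ u)) / gaussConv γ x := by
  rw [postSqErr, gaussPosterior, integral_withDensity_ofReal (hγ.measurable_posterior_density x)
    (hγ.posterior_density_nonneg x), ← integral_div]
  congr with u
  ring

lemma postSqErr_le_recenter (hγ : IsPriorDensity γ) (x m m' : ℝ) :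
    postSqErr γ x m ≤ 2 * postSqErr γ x m' + 2 * (m' - m) ^ 2 := by
  have := hγ.isProbabilityMeasure_gaussPosterior x
  have hint := (hγ.integrable_sq_sub_gaussPosterior x m').const_mul 2
  have hpointwise (u : ℝ) : (u - m) ^ 2 ≤ 2 * (u - m') ^ 2 + 2 * (m' - m) ^ 2 := by
    nlinarith [sq_nonneg ((u - m') - (m' - m))]
  calc postSqErr γ x m
      ≤ ∫ u, (2 * (u - m') ^ 2 + 2 * (m' - m) ^ 2) ∂gaussPosterior γ x := by
        rw [postSqErr]
        exact integral_mono (hγ.integrable_sq_sub_gaussPosterior x m)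
          (hint.add (integrable_const _)) hpointwise
    _ = 2 * postSqErr γ x m' + 2 * (m' - m) ^ 2 := by
        rw [integral_add hint (integrable_const _), integral_const_mul, integral_const, postSqErr,
          probReal_univ, one_smul]

lemma phi_mul_one_sub_le_gaussConv (hγ : IsPriorDensity γ) (heven : ∀ u, γ (-u) = γ u)
    (hsq : Integrable fun u => u ^ 2 * γ u) (x : ℝ) :
    phi x * (1 - (∫ u, u ^ 2 * γ u) / 2) ≤ gaussConv γ x := by
  have hint := hγ.integrable_phi_sub_mul x
  have hrefl : ∫ u, phi (x - -u) * γ u = ∫ u, phi (x - u) * γ u := by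
    rw [← integral_neg_eq_self (fun u => phi (x - u) * γ u)]
    simp only [heven]
  have hint' : Integrable fun u => phi (x - -u) * γ u := by
    simpa only [heven] using hint.comp_neg
  have hsum (u : ℝ) : phi x * (2 - u ^ 2) ≤ phi (x - u) + phi (x - -u) := by
    rw [phi_sub x u, phi_sub x (-u), ← mul_add]
    gcongr
    · exact (phi_pos x).le
    · linarith [Real.add_one_le_exp (x * u - u ^ 2 / 2),
        Real.add_one_le_exp (x * -u - (-u) ^ 2 / 2)]
  have hle : ∫ u, phi x * (2 * γ u - u ^ 2 * γ u)
      ≤ ∫ u, (phi (x - u) * γ u + phi (x - -u) * γ u) :=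
    integral_mono (((hγ.integrable.const_mul 2).sub hsq).const_mul _) (hint.add hint') fun u => by
      have := mul_le_mul_of_nonneg_right (hsum u) (hγ.pos u).le
      dsimp only
      linarith
  rw [integral_const_mul, integral_sub (hγ.integrable.const_mul 2) hsq, integral_const_mul,
    hγ.integral_eq_one, integral_add hint hint', hrefl] at hle
  rw [gaussConv]
  linarith

lemma gaussConv_le_phi_half_add (hγ : IsPriorDensity γ)
    (hmono : ∀ ⦃u v⦄, |u| ≤ |v| → γ v ≤ γ u) (x : ℝ) :
    gaussConv γ x ≤ phi (x / 2) + γ (x / 2) := by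
  have hpointwise (u : ℝ) :
      phi (x - u) * γ u ≤ phi (x / 2) * γ u + γ (x / 2) * phi (x - u) := by
    have hphi := phi_pos (x - u)
    have hu := hγ.pos u
    rcases le_total |u| |x / 2| with h | h
    · have hfar : |x / 2| ≤ |x - u| := by
        have : |x| = |x / 2| + |x / 2| := by rw [← two_mul, abs_div, abs_two]; ring
        linarith [abs_sub_abs_le_abs_sub x u]
      nlinarith [phi_le_phi_of_abs_le hfar, hγ.pos (x / 2)]
    · nlinarith [hmono h, phi_pos (x / 2)]
  have hphi := (integrable_phi.comp_sub_left x).const_mul (γ (x / 2))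
  calc gaussConv γ x
      ≤ ∫ u, (phi (x / 2) * γ u + γ (x / 2) * phi (x - u)) :=
        integral_mono (hγ.integrable_phi_sub_mul x) ((hγ.integrable.const_mul _).add hphi)
          hpointwise
    _ = phi (x / 2) + γ (x / 2) := by
        rw [integral_add (hγ.integrable.const_mul _) hphi, integral_const_mul, integral_const_mul,
          hγ.integral_eq_one, integral_sub_left_eq_self phi volume x, integral_phi, mul_one,
          mul_one]

lemma postSqErr_zero_le (hγ : IsPriorDensity γ) (x : ℝ) :
    postSqErr γ x 0 ≤ 16 * x ^ 2 + 4 * (phi x / gaussConv γ x) := by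
  have hpos := hγ.gaussConv_pos x
  have hint := (hγ.integrable_phi_sub_mul x).const_mul (16 * x ^ 2)
  have hpointwise (u : ℝ) : (u - 0) ^ 2 * (phi (x - u) * γ u)
      ≤ 16 * x ^ 2 * (phi (x - u) * γ u) + 4 * phi x * γ u := by
    have hphi := phi_pos x
    have hphi' := phi_pos (x - u)
    have hu := hγ.pos u
    rw [sub_zero]
    rcases le_total (4 * |x|) |u| with h | h
    · have := mul_le_mul_of_nonneg_right (sq_mul_phi_sub_le h) hu.le
      have : 0 ≤ 16 * x ^ 2 * (phi (x - u) * γ u) := by positivity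
      linarith
    · have hsq : u ^ 2 ≤ 16 * x ^ 2 := by
        rw [← sq_abs u, ← sq_abs x]
        nlinarith [abs_nonneg u]
      have := mul_le_mul_of_nonneg_right hsq (by positivity : 0 ≤ phi (x - u) * γ u)
      have : 0 ≤ 4 * phi x * γ u := by positivity
      linarith
  have hle := integral_mono (hγ.integrable_sq_sub_mul x 0)
    (hint.add (hγ.integrable.const_mul (4 * phi x))) hpointwise
  simp only [Pi.add_apply] at hle
  rw [integral_add hint (hγ.integrable.const_mul _), integral_const_mul, integral_const_mul,
    hγ.integral_eq_one, ← gaussConv] at hle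
  rw [hγ.postSqErr_eq_div, div_le_iff₀ hpos]
  calc _ ≤ _ := hle
    _ = _ := by field_simp

end IsPriorDensity

end NormalMean

section LaplacePrior

variable {b : ℝ}

lemma isPriorDensity_laplacePDF (hb : 0 < b) : IsPriorDensity (laplacePDF b) where
  measurable := measurable_laplacePDF b
  pos u := by unfold laplacePDF; positivity
  integral_eq_one := integral_laplacePDF hb

lemma phi_le_gaussConv_laplacePDF (hb : 2 ≤ b) (x : ℝ) :
    phi x ≤ (1 + 2 / b ^ 2) * gaussConv (laplacePDF b) x := by
  have hb0 : 0 < b := by linarith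
  have hsq : Integrable fun u => u ^ 2 * laplacePDF b u :=
    Integrable.of_integral_ne_zero (by rw [integral_sq_mul_laplacePDF hb0]; positivity)
  have hlow := (isPriorDensity_laplacePDF hb0).phi_mul_one_sub_le_gaussConv (laplacePDF_neg b) hsq x
  rw [integral_sq_mul_laplacePDF hb0] at hlow
  have hfactor : 1 ≤ (1 + 2 / b ^ 2) * (1 - 2 / b ^ 2 / 2) := by
    have hsmall : 2 / b ^ 2 ≤ 1 := by rw [div_le_one (by positivity)]; nlinarith
    nlinarith [show 0 ≤ 2 / b ^ 2 by positivity]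
  calc phi x ≤ phi x * ((1 + 2 / b ^ 2) * (1 - 2 / b ^ 2 / 2)) :=
        le_mul_of_one_le_right (phi_pos x).le hfactor
    _ = (1 + 2 / b ^ 2) * (phi x * (1 - 2 / b ^ 2 / 2)) := by ring
    _ ≤ (1 + 2 / b ^ 2) * gaussConv (laplacePDF b) x := by gcongr

lemma phi_le_two_mul_gaussConv_laplacePDF (hb : 2 ≤ b) (x : ℝ) :
    phi x ≤ 2 * gaussConv (laplacePDF b) x := by
  have hb0 : 0 < b := by linarith
  refine (phi_le_gaussConv_laplacePDF hb x).trans ?_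
  gcongr
  · exact ((isPriorDensity_laplacePDF hb0).gaussConv_pos x).le
  · have : 2 / b ^ 2 ≤ 1 := by rw [div_le_one (by positivity)]; nlinarith
    linarith

lemma postSqErr_laplacePDF_zero_le (hb : 2 ≤ b) (x : ℝ) :
    postSqErr (laplacePDF b) x 0 ≤ 16 * x ^ 2 + 8 := by
  have hγ := isPriorDensity_laplacePDF (by linarith : 0 < b)
  have hratio : phi x / gaussConv (laplacePDF b) x ≤ 2 := by
    rw [div_le_iff₀ (hγ.gaussConv_pos x)]
    exact phi_le_two_mul_gaussConv_laplacePDF hb x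
  linarith [hγ.postSqErr_zero_le x]

lemma postSqErr_laplacePDF_zero_le_of_abs_le (hb : 2 ≤ b) {x : ℝ} (hx : |x| ≤ b / 2) :
    postSqErr (laplacePDF b) x 0 ≤ 32 / b ^ 2 := by
  have hb0 : 0 < b := by linarith
  have hγ := isPriorDensity_laplacePDF hb0
  have hpointwise (u : ℝ) : (u - 0) ^ 2 * (phi (x - u) * laplacePDF b u)
      ≤ phi x * (2 * (u ^ 2 * laplacePDF (b / 2) u)) := by
    have hexp : x * u - u ^ 2 / 2 + -b * |u| ≤ -(b / 2) * |u| := by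
      have := mul_le_mul_of_nonneg_right hx (abs_nonneg u)
      nlinarith [le_abs_self (x * u), abs_mul x u, sq_nonneg u]
    calc (u - 0) ^ 2 * (phi (x - u) * laplacePDF b u)
        = phi x * (b / 2 * (u ^ 2 * exp (x * u - u ^ 2 / 2 + -b * |u|))) := by
          rw [phi_sub, laplacePDF, Real.exp_add]; ring
      _ ≤ phi x * (b / 2 * (u ^ 2 * exp (-(b / 2) * |u|))) := by
          gcongr
          exact (phi_pos x).le
      _ = phi x * (2 * (u ^ 2 * laplacePDF (b / 2) u)) := by rw [laplacePDF]; ring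
  have hmoment := integral_sq_mul_laplacePDF (half_pos hb0)
  have hint : Integrable fun u => u ^ 2 * laplacePDF (b / 2) u :=
    Integrable.of_integral_ne_zero (by rw [hmoment]; positivity)
  rw [hγ.postSqErr_eq_div, div_le_iff₀ (hγ.gaussConv_pos x)]
  calc ∫ u, (u - 0) ^ 2 * (phi (x - u) * laplacePDF b u)
      ≤ ∫ u, phi x * (2 * (u ^ 2 * laplacePDF (b / 2) u)) :=
        integral_mono (hγ.integrable_sq_sub_mul x 0) ((hint.const_mul 2).const_mul _) hpointwise
    _ = 16 / b ^ 2 * phi x := by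
        rw [integral_const_mul, integral_const_mul, hmoment]
        field_simp
        norm_num
    _ ≤ 16 / b ^ 2 * (2 * gaussConv (laplacePDF b) x) := by
        gcongr; exact phi_le_two_mul_gaussConv_laplacePDF hb x
    _ = 32 / b ^ 2 * gaussConv (laplacePDF b) x := by ring

lemma postSqErr_laplacePDF_zero_le_div (hb : 2 ≤ b) (x : ℝ) :
    postSqErr (laplacePDF b) x 0 ≤ 64 * (1 + x ^ 2) ^ 2 / b ^ 2 := by
  rcases le_total |x| (b / 2) with h | h
  · refine (postSqErr_laplacePDF_zero_le_of_abs_le hb h).trans ?_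
    gcongr
    nlinarith [sq_nonneg x, sq_nonneg (x ^ 2)]
  · have hsq : b ^ 2 ≤ 4 * (1 + x ^ 2) := by
      rw [← sq_abs x]
      nlinarith
    rw [le_div_iff₀ (by positivity)]
    calc postSqErr (laplacePDF b) x 0 * b ^ 2
        ≤ (16 * (1 + x ^ 2)) * (4 * (1 + x ^ 2)) := by
          gcongr
          linarith [postSqErr_laplacePDF_zero_le hb x]
      _ = 64 * (1 + x ^ 2) ^ 2 := by ring

lemma sq_one_add_sq_mul_laplacePDF_half_le (hb : 0 < b) {x : ℝ} (hx : 1 ≤ x ^ 2) :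
    (1 + x ^ 2) ^ 2 * laplacePDF b (x / 2) ≤ 92160 / b ^ 5 := by
  set y := b * |x / 2|
  have hy : y ^ 6 = b ^ 6 * x ^ 6 / 64 := by
    rw [mul_pow, Even.pow_abs ⟨3, rfl⟩]; ring
  have hx6 : 1 ≤ x ^ 6 := by simpa [← pow_mul] using one_le_pow₀ hx (n := 3)
  have hexp : exp (-y) ≤ 46080 / (b ^ 6 * x ^ 6) := by
    have hpow := Real.pow_div_factorial_le_exp y (by positivity) 6
    rw [Real.exp_neg, inv_le_comm₀ (exp_pos _) (by positivity), inv_div]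
    refine le_trans (le_of_eq ?_) hpow
    rw [hy]
    norm_num [Nat.factorial]
    ring
  have hpoly : (1 + x ^ 2) ^ 2 ≤ 4 * x ^ 6 := by
    calc (1 + x ^ 2) ^ 2 ≤ (2 * x ^ 2) ^ 2 := by gcongr; linarith
      _ ≤ (2 * x ^ 2) ^ 2 * x ^ 2 := le_mul_of_one_le_right (by positivity) hx
      _ = 4 * x ^ 6 := by ring
  calc (1 + x ^ 2) ^ 2 * laplacePDF b (x / 2)
      = (1 + x ^ 2) ^ 2 * (b / 2 * exp (-y)) := by rw [laplacePDF, neg_mul]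
    _ ≤ 4 * x ^ 6 * (b / 2 * (46080 / (b ^ 6 * x ^ 6))) := by gcongr
    _ = 92160 / b ^ 5 := by
        have : x ≠ 0 := by rintro rfl; norm_num at hx
        field_simp
        norm_num

end LaplacePrior

section CauchyTailedPrior

open ProbabilityTheory

lemma one_add_sq_le_two_mul (x y : ℝ) : 1 + x ^ 2 ≤ 2 * (1 + (x - y) ^ 2) * (1 + y ^ 2) := by
  nlinarith [sq_nonneg (x - 2 * y), sq_nonneg ((x - y) * y)]

lemma inv_one_add_sq_sub_le (x w : ℝ) :
    (1 + (x - w) ^ 2)⁻¹ ≤ 2 * (1 + x ^ 2)⁻¹ * (1 + w ^ 2) := by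
  rw [← div_eq_mul_inv, div_mul_eq_mul_div, inv_eq_one_div,
    div_le_div_iff₀ (by positivity) (by positivity)]
  linarith [one_add_sq_le_two_mul x w]

lemma le_inv_one_add_sq_sub (x w : ℝ) :
    1 / 2 * (1 + x ^ 2)⁻¹ * exp (-1 * w ^ 2) ≤ (1 + (x - w) ^ 2)⁻¹ := by
  have hexp : exp (-1 * w ^ 2) ≤ (1 + w ^ 2)⁻¹ := by
    rw [neg_one_mul, Real.exp_neg]
    exact inv_anti₀ (by positivity) (by linarith [Real.add_one_le_exp (w ^ 2)])
  calc 1 / 2 * (1 + x ^ 2)⁻¹ * exp (-1 * w ^ 2)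
      ≤ 1 / 2 * (1 + x ^ 2)⁻¹ * (1 + w ^ 2)⁻¹ := by gcongr
    _ = (2 * (1 + x ^ 2) * (1 + w ^ 2))⁻¹ := by rw [mul_inv, mul_inv]; ring
    _ ≤ (1 + (x - w) ^ 2)⁻¹ :=
        inv_anti₀ (by positivity) (by simpa using one_add_sq_le_two_mul (x - w) (-w))

namespace IsPriorDensity

variable {γ : ℝ → ℝ} {a A : ℝ}

lemma le_gaussConv_of_le (hγ : IsPriorDensity γ) (ha : 0 ≤ a)
    (hle : ∀ u, a * (1 + u ^ 2)⁻¹ ≤ γ u) (x : ℝ) :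
    a / 4 * (1 + x ^ 2)⁻¹ ≤ gaussConv γ x := by
  rw [gaussConv, integral_phi_sub_mul]
  calc a / 4 * (1 + x ^ 2)⁻¹ = a / 2 * (1 + x ^ 2)⁻¹ * (1 / 2) := by ring
    _ ≤ a / 2 * (1 + x ^ 2)⁻¹ * ∫ w, exp (-1 * w ^ 2) ∂gaussianReal 0 1 := by
        gcongr; exact one_half_le_integral_exp_neg_sq_gaussianReal
    _ = ∫ w, a / 2 * (1 + x ^ 2)⁻¹ * exp (-1 * w ^ 2) ∂gaussianReal 0 1 :=
        (integral_const_mul _ _).symm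
    _ ≤ ∫ w, γ (x - w) ∂gaussianReal 0 1 := by
        refine integral_mono ((integrable_exp_mul_sq_gaussianReal (by norm_num)).const_mul _)
          (integrable_phi_sub_mul_iff.1 (hγ.integrable_phi_sub_mul x)) fun w => ?_
        refine le_trans ?_ (hle (x - w))
        calc a / 2 * (1 + x ^ 2)⁻¹ * exp (-1 * w ^ 2)
            = a * (1 / 2 * (1 + x ^ 2)⁻¹ * exp (-1 * w ^ 2)) := by ring
          _ ≤ a * (1 + (x - w) ^ 2)⁻¹ := by gcongr; exact le_inv_one_add_sq_sub x w

lemma gaussConv_le_of_le (hγ : IsPriorDensity γ) (hle : ∀ u, γ u ≤ A * (1 + u ^ 2)⁻¹) (x : ℝ) :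
    gaussConv γ x ≤ 16 * A * (1 + x ^ 2)⁻¹ := by
  have hA : 0 ≤ A := by simpa using (hγ.pos 0).le.trans (hle 0)
  rw [gaussConv, integral_phi_sub_mul]
  calc ∫ w, γ (x - w) ∂gaussianReal 0 1
      ≤ ∫ w, 8 * A * (1 + x ^ 2)⁻¹ * exp (1 / 4 * w ^ 2) ∂gaussianReal 0 1 := by
        refine integral_mono (integrable_phi_sub_mul_iff.1 (hγ.integrable_phi_sub_mul x))
          ((integrable_exp_mul_sq_gaussianReal (by norm_num)).const_mul _) fun w => ?_
        calc γ (x - w) ≤ A * (2 * (1 + x ^ 2)⁻¹ * (1 + w ^ 2)) :=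
              (hle _).trans (by gcongr; exact inv_one_add_sq_sub_le x w)
          _ ≤ A * (2 * (1 + x ^ 2)⁻¹ * ((1 / 4)⁻¹ * exp (1 / 4 * w ^ 2))) := by
              gcongr; exact one_add_sq_le_mul_exp (by norm_num) (by norm_num) w
          _ = 8 * A * (1 + x ^ 2)⁻¹ * exp (1 / 4 * w ^ 2) := by ring
    _ = 8 * A * (1 + x ^ 2)⁻¹ * ∫ w, exp (1 / 4 * w ^ 2) ∂gaussianReal 0 1 :=
        integral_const_mul _ _
    _ ≤ 8 * A * (1 + x ^ 2)⁻¹ * 2 := by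
        gcongr; exact integral_exp_sq_div_four_gaussianReal_le
    _ = 16 * A * (1 + x ^ 2)⁻¹ := by ring

lemma integral_sq_sub_mul_le_of_le (hγ : IsPriorDensity γ)
    (hle : ∀ u, γ u ≤ A * (1 + u ^ 2)⁻¹) (x : ℝ) :
    ∫ u, (u - x) ^ 2 * (phi (x - u) * γ u) ≤ 256 * A * (1 + x ^ 2)⁻¹ := by
  have hA : 0 ≤ A := by simpa using (hγ.pos 0).le.trans (hle 0)
  have hint := hγ.integrable_sq_sub_mul x x
  simp only [mul_left_comm ((_ : ℝ) ^ 2)] at hint ⊢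
  rw [integral_phi_sub_mul]
  rw [integrable_phi_sub_mul_iff (f := fun u => (u - x) ^ 2 * γ u)] at hint
  calc ∫ w, (x - w - x) ^ 2 * γ (x - w) ∂gaussianReal 0 1
      ≤ ∫ w, 128 * A * (1 + x ^ 2)⁻¹ * exp (1 / 4 * w ^ 2) ∂gaussianReal 0 1 := by
        refine integral_mono hint
          ((integrable_exp_mul_sq_gaussianReal (by norm_num)).const_mul _) fun w => ?_
        calc (x - w - x) ^ 2 * γ (x - w)
            ≤ (1 + w ^ 2) * (A * (2 * (1 + x ^ 2)⁻¹ * (1 + w ^ 2))) :=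
              mul_le_mul (by linarith) ((hle _).trans (by gcongr; exact inv_one_add_sq_sub_le x w))
                (hγ.pos _).le (by positivity)
          _ = 2 * A * (1 + x ^ 2)⁻¹ * (1 + w ^ 2) ^ 2 := by ring
          _ ≤ 2 * A * (1 + x ^ 2)⁻¹ * (64 * exp (1 / 4 * w ^ 2)) := by
              gcongr; exact sq_one_add_sq_le_exp w
          _ = 128 * A * (1 + x ^ 2)⁻¹ * exp (1 / 4 * w ^ 2) := by ring
    _ = 128 * A * (1 + x ^ 2)⁻¹ * ∫ w, exp (1 / 4 * w ^ 2) ∂gaussianReal 0 1 :=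
        integral_const_mul _ _
    _ ≤ 128 * A * (1 + x ^ 2)⁻¹ * 2 := by
        gcongr; exact integral_exp_sq_div_four_gaussianReal_le
    _ = 256 * A * (1 + x ^ 2)⁻¹ := by ring

lemma postSqErr_self_le_of_le_of_le (hγ : IsPriorDensity γ) (ha : 0 < a)
    (hlower : ∀ u, a * (1 + u ^ 2)⁻¹ ≤ γ u) (hupper : ∀ u, γ u ≤ A * (1 + u ^ 2)⁻¹) (x : ℝ) :
    postSqErr γ x x ≤ 1024 * A / a := by
  have hA : 0 ≤ A := by simpa using (hγ.pos 0).le.trans (hupper 0)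
  rw [hγ.postSqErr_eq_div, div_le_iff₀ (hγ.gaussConv_pos x)]
  calc ∫ u, (u - x) ^ 2 * (phi (x - u) * γ u)
      ≤ 256 * A * (1 + x ^ 2)⁻¹ := hγ.integral_sq_sub_mul_le_of_le hupper x
    _ = 1024 * A / a * (a / 4 * (1 + x ^ 2)⁻¹) := by field_simp; ring
    _ ≤ 1024 * A / a * gaussConv γ x := by
        gcongr; exact hγ.le_gaussConv_of_le ha.le hlower x

end IsPriorDensity

end CauchyTailedPrior

section SpikeAndSlab

open Filter

variable {n : ℕ}

lemma one_le_log_natCast (hn : 3 ≤ n) : 1 ≤ log n := by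
  have hn3 : (3 : ℝ) ≤ n := by exact_mod_cast hn
  rw [Real.le_log_iff_exp_le (by linarith)]
  linarith [Real.exp_one_lt_three]

lemma five_mul_le_lam0 (n : ℕ) : 5 * (n : ℝ) ≤ lam0 n := by
  have := mul_le_mul_of_nonneg_right one_le_sqrt_two_pi (Nat.cast_nonneg n : (0 : ℝ) ≤ n)
  unfold lam0
  linarith

lemma two_le_lam0 (hn : 0 < n) : 2 ≤ lam0 n := by
  have : (1 : ℝ) ≤ n := by exact_mod_cast hn
  linarith [five_mul_le_lam0 n]

lemma isPriorDensity_gamma0 (hn : 0 < n) : IsPriorDensity (gamma0 n) :=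
  isPriorDensity_laplacePDF (by linarith [two_le_lam0 hn])

lemma isPriorDensity_gamma1 : IsPriorDensity gamma1 :=
  ⟨measurable_gamma1, gamma1_pos, integral_gamma1⟩

lemma g0_pos (hn : 0 < n) (x : ℝ) : 0 < g0 n x := (isPriorDensity_gamma0 hn).gaussConv_pos x

lemma measurable_g0 (hn : 0 < n) : Measurable (g0 n) :=
  (isPriorDensity_gamma0 hn).measurable_gaussConv

lemma g1_pos (x : ℝ) : 0 < g1 x := isPriorDensity_gamma1.gaussConv_pos x

lemma measurable_g1 : Measurable g1 := isPriorDensity_gamma1.measurable_gaussConv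

lemma le_g1 (x : ℝ) : 1 / 320 * (1 + x ^ 2)⁻¹ ≤ g1 x := by
  have := isPriorDensity_gamma1.le_gaussConv_of_le (by norm_num) le_gamma1 x
  norm_num at this ⊢
  exact this

lemma g1_le (x : ℝ) : g1 x ≤ 112 * (1 + x ^ 2)⁻¹ := by
  have := isPriorDensity_gamma1.gaussConv_le_of_le gamma1_le x
  norm_num at this
  exact this

lemma postSqErr_gamma1_self_le (x : ℝ) : postSqErr gamma1 x x ≤ 573440 := by
  have := isPriorDensity_gamma1.postSqErr_self_le_of_le_of_le (by norm_num) le_gamma1 gamma1_le x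
  norm_num at this
  exact this

lemma phi_le_g0 (hn : 0 < n) (x : ℝ) : phi x ≤ (1 + 1 / n) * g0 n x := by
  have hn1 : (1 : ℝ) ≤ n := by exact_mod_cast hn
  have hlam := five_mul_le_lam0 n
  have hlam0 : 0 < lam0 n := by linarith
  refine (phi_le_gaussConv_laplacePDF (two_le_lam0 hn) x).trans ?_
  refine mul_le_mul_of_nonneg_right ?_ (g0_pos hn x).le
  gcongr 1 + ?_
  rw [div_le_div_iff₀ (by positivity) (by positivity)]
  nlinarith

lemma postSqErr_gamma0_zero_le (hn : 0 < n) (x : ℝ) :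
    postSqErr (gamma0 n) x 0 ≤ 16 * x ^ 2 + 8 :=
  postSqErr_laplacePDF_zero_le (two_le_lam0 hn) x

lemma postSqErr_gamma0_zero_le_div (hn : 0 < n) (x : ℝ) :
    postSqErr (gamma0 n) x 0 ≤ 3 * (1 + x ^ 2) ^ 2 / n := by
  have hn1 : (1 : ℝ) ≤ n := by exact_mod_cast hn
  have hlam0 : 0 < lam0 n := by linarith [two_le_lam0 hn]
  have hlam : 25 * (n : ℝ) ≤ lam0 n ^ 2 := by nlinarith [five_mul_le_lam0 n]
  refine (postSqErr_laplacePDF_zero_le_div (two_le_lam0 hn) x).trans ?_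
  rw [div_le_div_iff₀ (by positivity) (by positivity)]
  nlinarith [mul_le_mul_of_nonneg_left hlam (sq_nonneg (1 + x ^ 2)), sq_nonneg (1 + x ^ 2)]

/-- Above the level `√(32 log n)` the slab marginal dominates the spike marginal, with room for a
factor `n (1 + x²)`: there the data speak for the slab as soon as its weight is at least `1 / n`. -/
def SlabDominates (n : ℕ) : Prop :=
  ∀ x : ℝ, 32 * log n ≤ x ^ 2 → n * ((1 + x ^ 2) * g0 n x) ≤ g1 x

lemma sq_one_add_sq_mul_phi_half_le {x : ℝ} (hn : 0 < n) (hx : 32 * log n ≤ x ^ 2) :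
    (1 + x ^ 2) ^ 2 * phi (x / 2) ≤ 1024 / (n : ℝ) ^ 2 := by
  have hn0 : (0 : ℝ) < n := by exact_mod_cast hn
  have hdecay : exp (-x ^ 2 / 16) ≤ 1 / (n : ℝ) ^ 2 := by
    calc exp (-x ^ 2 / 16) ≤ exp (-(2 * log n)) := exp_le_exp.2 (by linarith)
      _ = 1 / (n : ℝ) ^ 2 := by
          rw [Real.exp_neg, mul_comm, Real.exp_mul, Real.exp_log hn0, one_div]
          norm_cast
  calc (1 + x ^ 2) ^ 2 * phi (x / 2)
      ≤ ((1 / 32)⁻¹ * exp (1 / 32 * x ^ 2)) ^ 2 * exp (-(x / 2) ^ 2 / 2) := by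
        gcongr
        exacts [(phi_pos _).le, one_add_sq_le_mul_exp (by norm_num) (by norm_num) x, phi_le_exp _]
    _ = 1024 * exp (-x ^ 2 / 16) := by
        rw [mul_pow, ← Real.exp_nat_mul, mul_assoc, ← Real.exp_add]
        ring_nf
    _ ≤ 1024 * (1 / (n : ℝ) ^ 2) := by gcongr
    _ = 1024 / (n : ℝ) ^ 2 := by ring

lemma slabDominates_of_le (hn : 10 ^ 8 ≤ n) : SlabDominates n := by
  intro x hx
  have hn8 : (10 : ℝ) ^ 8 ≤ n := by exact_mod_cast hn
  have hn0 : 0 < n := by lia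
  have hb : 0 < lam0 n := by linarith [two_le_lam0 hn0]
  have hx1 : 1 ≤ x ^ 2 := by linarith [one_le_log_natCast (n := n) (by lia)]
  have hlap : (1 + x ^ 2) ^ 2 * gamma0 n (x / 2) ≤ 92160 / (n : ℝ) ^ 2 := by
    refine (sq_one_add_sq_mul_laplacePDF_half_le hb hx1).trans ?_
    gcongr
    calc (n : ℝ) ^ 2 ≤ (n : ℝ) ^ 5 := by gcongr <;> linarith
      _ ≤ lam0 n ^ 5 := by gcongr; linarith [five_mul_le_lam0 n]
  have hg0 := (isPriorDensity_gamma0 hn0).gaussConv_le_phi_half_add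
    (fun _ _ => laplacePDF_le_of_abs_le hb) x
  refine le_trans ?_ (le_g1 x)
  rw [← div_eq_mul_inv, le_div_iff₀ (by positivity)]
  calc n * ((1 + x ^ 2) * g0 n x) * (1 + x ^ 2)
      = n * ((1 + x ^ 2) ^ 2 * g0 n x) := by ring
    _ ≤ n * ((1 + x ^ 2) ^ 2 * (phi (x / 2) + gamma0 n (x / 2))) := by gcongr; exact hg0
    _ ≤ n * (1024 / (n : ℝ) ^ 2 + 92160 / (n : ℝ) ^ 2) := by
        rw [mul_add]
        gcongr
        exact sq_one_add_sq_mul_phi_half_le hn0 hx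
    _ ≤ 1 / 320 := by
        rw [← add_div, mul_div_assoc', div_le_div_iff₀ (by positivity) (by norm_num)]
        nlinarith

lemma eventually_slabDominates : ∀ᶠ n in atTop, SlabDominates n :=
  (eventually_ge_atTop (10 ^ 8)).mono fun _ => slabDominates_of_le

end SpikeAndSlab

section MixtureLikelihood

variable {Ω : Type*} {f₀ f₁ p : Ω → ℝ} {α : ℝ} {x : Ω}

/-- Two-component mixture with weight `α` on `f₁`. -/
def mixture (f₀ f₁ : Ω → ℝ) (α : ℝ) (x : Ω) : ℝ := (1 - α) * f₀ x + α * f₁ x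

/-- Likelihood ratio of the mixture weight `2 * α` against the mixture weight `α`. -/
def mixRatio (f₀ f₁ : Ω → ℝ) (α : ℝ) (x : Ω) : ℝ :=
  mixture f₀ f₁ (2 * α) x / mixture f₀ f₁ α x

lemma mixture_pos (hf₀ : 0 < f₀ x) (hf₁ : 0 < f₁ x) (h0 : 0 ≤ α) (h1 : α ≤ 1) :
    0 < mixture f₀ f₁ α x := by
  unfold mixture
  rcases h0.eq_or_lt with rfl | h0
  · linarith
  · have := mul_nonneg (sub_nonneg.2 h1) hf₀.le
    positivity

lemma mixRatio_nonneg (hf₀ : 0 < f₀ x) (hf₁ : 0 < f₁ x) (h0 : 0 ≤ α) (h1 : α ≤ 1 / 2) :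
    0 ≤ mixRatio f₀ f₁ α x :=
  div_nonneg (mixture_pos hf₀ hf₁ (by linarith) (by linarith)).le
    (mixture_pos hf₀ hf₁ h0 (by linarith)).le

lemma mixRatio_le_two (hf₀ : 0 < f₀ x) (hf₁ : 0 < f₁ x) (h0 : 0 ≤ α) (h1 : α ≤ 1 / 2) :
    mixRatio f₀ f₁ α x ≤ 2 := by
  rw [mixRatio, div_le_iff₀ (mixture_pos hf₀ hf₁ h0 (by linarith)), mixture, mixture]
  linarith

-- Concavity of the log-likelihood in the weight: `2 * α` lies between `α` and `β`.
lemma one_le_prod_mixRatio {ι : Type*} [Fintype ι] (hf₀ : ∀ x, 0 < f₀ x) (hf₁ : ∀ x, 0 < f₁ x)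
    {β : ℝ} (h0 : 0 < α) (hαβ : 2 * α ≤ β) (h1 : β ≤ 1) {X : ι → Ω}
    (hle : ∑ i, log (mixture f₀ f₁ α (X i)) ≤ ∑ i, log (mixture f₀ f₁ β (X i))) :
    1 ≤ ∏ i, mixRatio f₀ f₁ α (X i) := by
  have hpos {w : ℝ} (hw0 : 0 < w) (hw1 : w ≤ 1) (i : ι) : 0 < mixture f₀ f₁ w (X i) :=
    mixture_pos (hf₀ _) (hf₁ _) hw0.le hw1
  have hposα := hpos h0 (by linarith)
  have hposβ := hpos (by linarith) h1
  have hpos2 := hpos (by linarith : 0 < 2 * α) (by linarith)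
  have hgap : 0 < β - α := by linarith
  set τ := α / (β - α)
  have hτ0 : 0 ≤ τ := by positivity
  have hτ1 : τ ≤ 1 := (div_le_one hgap).2 (by linarith)
  have hτ : τ * (β - α) = α := div_mul_cancel₀ _ hgap.ne'
  have hconcave (i : ι) : (1 - τ) * log (mixture f₀ f₁ α (X i))
      + τ * log (mixture f₀ f₁ β (X i)) ≤ log (mixture f₀ f₁ (2 * α) (X i)) := by
    have hcombo : (1 - τ) * mixture f₀ f₁ α (X i) + τ * mixture f₀ f₁ β (X i)
        = mixture f₀ f₁ (2 * α) (X i) := by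
      unfold mixture
      linear_combination (f₁ (X i) - f₀ (X i)) * hτ
    rw [← hcombo]
    exact strictConcaveOn_log_Ioi.concaveOn.2 (hposα i) (hposβ i) (sub_nonneg.2 hτ1) hτ0
      (sub_add_cancel 1 τ)
  have hsum := Finset.sum_le_sum fun i (_ : i ∈ Finset.univ) => hconcave i
  rw [Finset.sum_add_distrib, ← Finset.mul_sum, ← Finset.mul_sum] at hsum
  simp only [mixRatio, Finset.prod_div_distrib]
  rw [one_le_div (Finset.prod_pos fun i _ => hposα i),
    ← Real.log_le_log_iff (Finset.prod_pos fun i _ => hposα i) (Finset.prod_pos fun i _ => hpos2 i),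
    Real.log_prod fun i _ => (hposα i).ne', Real.log_prod fun i _ => (hpos2 i).ne']
  nlinarith [mul_le_mul_of_nonneg_left hle hτ0]

-- Pointwise gain of the smaller weight under the law `f₀`, by the identity
-- `f₀ * mixRatio α = mixture α - α² (f₁ - f₀)² / mixture α`.
lemma mul_mixRatio_le (hf₀ : 0 < f₀ x) (hf₁ : 0 < f₁ x) (h0 : 0 < α) (h1 : α ≤ 1 / 4) {T : Set Ω}
    (hT : x ∈ T → f₀ x ≤ α * f₁ x) :
    f₀ x * mixRatio f₀ f₁ α x ≤ mixture f₀ f₁ α x - T.indicator (fun y => α / 8 * f₁ y) x := by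
  have hm : 0 < mixture f₀ f₁ α x := mixture_pos hf₀ hf₁ h0.le (by linarith)
  have hid : f₀ x * mixRatio f₀ f₁ α x
      = mixture f₀ f₁ α x - α ^ 2 * (f₁ x - f₀ x) ^ 2 / mixture f₀ f₁ α x := by
    rw [mixRatio]
    field_simp
    unfold mixture
    ring
  rw [hid]
  gcongr ?_ - ?_
  by_cases hx : x ∈ T
  · rw [indicator_of_mem hx, le_div_iff₀ hm]
    have hdom := hT hx
    have hgap : 3 / 4 * f₁ x ≤ f₁ x - f₀ x := by nlinarith
    calc α / 8 * f₁ x * mixture f₀ f₁ α x ≤ α / 8 * f₁ x * (2 * (α * f₁ x)) := by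
          gcongr
          unfold mixture
          nlinarith
      _ ≤ α ^ 2 * (3 / 4 * f₁ x) ^ 2 := by nlinarith [sq_nonneg (α * f₁ x)]
      _ ≤ α ^ 2 * (f₁ x - f₀ x) ^ 2 := by gcongr
  · rw [indicator_of_notMem hx]
    positivity

variable [MeasurableSpace Ω] {μ : Measure Ω}

lemma measurable_mixture (hf₀ : Measurable f₀) (hf₁ : Measurable f₁) (α : ℝ) :
    Measurable (mixture f₀ f₁ α) := by
  unfold mixture; fun_prop

lemma measurable_mixRatio (hf₀ : Measurable f₀) (hf₁ : Measurable f₁) (α : ℝ) :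
    Measurable (mixRatio f₀ f₁ α) :=
  (measurable_mixture hf₀ hf₁ _).div (measurable_mixture hf₀ hf₁ _)

lemma integral_mul_mixRatio_le (hf₀ : ∀ x, 0 < f₀ x) (hf₁ : ∀ x, 0 < f₁ x)
    (hf₀one : ∫ x, f₀ x ∂μ = 1) (hf₁one : ∫ x, f₁ x ∂μ = 1) (h0 : 0 < α) (h1 : α ≤ 1 / 4)
    {T : Set Ω} (hTm : MeasurableSet T) (hT : ∀ x ∈ T, f₀ x ≤ α * f₁ x)
    {ε : ℝ} (hε : 0 ≤ ε) (hp0 : ∀ x, 0 ≤ p x) (hp : ∀ x, p x ≤ (1 + ε) * f₀ x) :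
    ∫ x, p x * mixRatio f₀ f₁ α x ∂μ ≤ exp (ε - α / 8 * ∫ x in T, f₁ x ∂μ) := by
  have hi₀ : Integrable f₀ μ := Integrable.of_integral_ne_zero (hf₀one ▸ one_ne_zero)
  have hi₁ : Integrable f₁ μ := Integrable.of_integral_ne_zero (hf₁one ▸ one_ne_zero)
  have hmix : Integrable (mixture f₀ f₁ α) μ := (hi₀.const_mul _).add (hi₁.const_mul _)
  have hind : Integrable (T.indicator fun y => α / 8 * f₁ y) μ := (hi₁.const_mul _).indicator hTm
  have hmix_one : ∫ x, mixture f₀ f₁ α x ∂μ = 1 := by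
    simp only [mixture]
    rw [integral_add (hi₀.const_mul _) (hi₁.const_mul _), integral_const_mul, integral_const_mul,
      hf₀one, hf₁one]
    ring
  have hratio (x : Ω) : 0 ≤ mixRatio f₀ f₁ α x :=
    mixRatio_nonneg (hf₀ x) (hf₁ x) h0.le (by linarith)
  have hpointwise (x : Ω) : p x * mixRatio f₀ f₁ α x
      ≤ (1 + ε) * (mixture f₀ f₁ α x - T.indicator (fun y => α / 8 * f₁ y) x) := by
    calc p x * mixRatio f₀ f₁ α x ≤ (1 + ε) * f₀ x * mixRatio f₀ f₁ α x :=
          mul_le_mul_of_nonneg_right (hp x) (hratio x)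
      _ ≤ _ := by
          rw [mul_assoc]
          gcongr
          exact mul_mixRatio_le (hf₀ x) (hf₁ x) h0 h1 (hT x)
  calc ∫ x, p x * mixRatio f₀ f₁ α x ∂μ
      ≤ ∫ x, (1 + ε) * (mixture f₀ f₁ α x - T.indicator (fun y => α / 8 * f₁ y) x) ∂μ :=
        integral_mono_of_nonneg (ae_of_all _ fun x => mul_nonneg (hp0 x) (hratio x))
          ((hmix.sub hind).const_mul _) (ae_of_all _ hpointwise)
    _ = (1 + ε) * (1 - α / 8 * ∫ x in T, f₁ x ∂μ) := by
        rw [integral_const_mul, integral_sub hmix hind, hmix_one, integral_indicator hTm,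
          integral_const_mul]
    _ ≤ (1 + ε) * exp (-(α / 8 * ∫ x in T, f₁ x ∂μ)) := by
        gcongr; exact Real.one_sub_le_exp_neg _
    _ ≤ exp ε * exp (-(α / 8 * ∫ x in T, f₁ x ∂μ)) := by
        gcongr; linarith [Real.add_one_le_exp ε]
    _ = exp (ε - α / 8 * ∫ x in T, f₁ x ∂μ) := by rw [← Real.exp_add, ← sub_eq_add_neg]

end MixtureLikelihood

section CoordinatePosterior

variable {n : ℕ} {α : ℝ}

lemma aSSL_nonneg (hn : 0 < n) (h0 : 0 ≤ α) (h1 : α ≤ 1) (x : ℝ) : 0 ≤ aSSL n α x :=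
  div_nonneg (mul_nonneg h0 (g1_pos x).le) (mixture_pos (g0_pos hn x) (g1_pos x) h0 h1).le

lemma one_sub_aSSL (hn : 0 < n) (h0 : 0 ≤ α) (h1 : α ≤ 1) (x : ℝ) :
    1 - aSSL n α x = (1 - α) * g0 n x / mixture (g0 n) g1 α x := by
  have hm := (mixture_pos (g0_pos hn x) (g1_pos x) h0 h1).ne'
  rw [mixture] at hm ⊢
  rw [aSSL]
  field_simp
  ring

lemma aSSL_le_one (hn : 0 < n) (h0 : 0 ≤ α) (h1 : α ≤ 1) (x : ℝ) : aSSL n α x ≤ 1 := by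
  rw [← sub_nonneg, one_sub_aSSL hn h0 h1]
  exact div_nonneg (mul_nonneg (sub_nonneg.2 h1) (g0_pos hn x).le)
    (mixture_pos (g0_pos hn x) (g1_pos x) h0 h1).le

lemma coordPostSSL_eq_add (hn : 0 < n) (h0 : 0 ≤ α) (h1 : α ≤ 1) (x : ℝ) :
    coordPostSSL n α x = ENNReal.ofReal (1 - aSSL n α x) • gaussPosterior (gamma0 n) x
      + ENNReal.ofReal (aSSL n α x) • gaussPosterior gamma1 x := by
  have ha0 := aSSL_nonneg hn h0 h1 x
  have ha1 := sub_nonneg.2 (aSSL_le_one hn h0 h1 x)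
  have hγ₀ := isPriorDensity_gamma0 hn
  have hγ₁ := isPriorDensity_gamma1
  have hm₀ := (hγ₀.measurable_posterior_density x).ennreal_ofReal
  have hm₁ := (hγ₁.measurable_posterior_density x).ennreal_ofReal
  rw [gaussPosterior, gaussPosterior, ← withDensity_smul _ hm₀, ← withDensity_smul _ hm₁,
    ← withDensity_add_left (hm₀.const_smul _), coordPostSSL]
  congr with u
  change ENNReal.ofReal ((1 - aSSL n α x) * (phi (x - u) * gamma0 n u / gaussConv (gamma0 n) x)
    + aSSL n α x * (phi (x - u) * gamma1 u / gaussConv gamma1 x)) = _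
  rw [ENNReal.ofReal_add (mul_nonneg ha1 (hγ₀.posterior_density_nonneg x u))
    (mul_nonneg ha0 (hγ₁.posterior_density_nonneg x u)), ENNReal.ofReal_mul ha1,
    ENNReal.ofReal_mul ha0]
  rfl

lemma isProbabilityMeasure_coordPostSSL (hn : 0 < n) (h0 : 0 ≤ α) (h1 : α ≤ 1) (x : ℝ) :
    IsProbabilityMeasure (coordPostSSL n α x) := by
  have := (isPriorDensity_gamma0 hn).isProbabilityMeasure_gaussPosterior x
  have := isPriorDensity_gamma1.isProbabilityMeasure_gaussPosterior x
  refine ⟨?_⟩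
  rw [coordPostSSL_eq_add hn h0 h1, Measure.add_apply, Measure.smul_apply, Measure.smul_apply,
    measure_univ, measure_univ, smul_eq_mul, smul_eq_mul, mul_one, mul_one,
    ← ENNReal.ofReal_add (sub_nonneg.2 (aSSL_le_one hn h0 h1 x)) (aSSL_nonneg hn h0 h1 x),
    sub_add_cancel, ENNReal.ofReal_one]

lemma integrable_sq_sub_coordPostSSL (hn : 0 < n) (h0 : 0 ≤ α) (h1 : α ≤ 1) (x m : ℝ) :
    Integrable (fun u => (u - m) ^ 2) (coordPostSSL n α x) := by
  rw [coordPostSSL_eq_add hn h0 h1]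
  exact (((isPriorDensity_gamma0 hn).integrable_sq_sub_gaussPosterior x m).smul_measure
    ENNReal.ofReal_ne_top).add_measure
    ((isPriorDensity_gamma1.integrable_sq_sub_gaussPosterior x m).smul_measure
      ENNReal.ofReal_ne_top)

/-- Posterior mean squared distance to `m` in one coordinate of the spike-and-slab posterior. -/
def coordRisk (n : ℕ) (α x m : ℝ) : ℝ := ∫ u, (u - m) ^ 2 ∂coordPostSSL n α x

lemma coordRisk_eq (hn : 0 < n) (h0 : 0 ≤ α) (h1 : α ≤ 1) (x m : ℝ) :
    coordRisk n α x m = (1 - aSSL n α x) * postSqErr (gamma0 n) x m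
      + aSSL n α x * postSqErr gamma1 x m := by
  have hi₀ := (isPriorDensity_gamma0 hn).integrable_sq_sub_gaussPosterior x m
  have hi₁ := isPriorDensity_gamma1.integrable_sq_sub_gaussPosterior x m
  rw [coordRisk, coordPostSSL_eq_add hn h0 h1,
    integral_add_measure (hi₀.smul_measure ENNReal.ofReal_ne_top)
      (hi₁.smul_measure ENNReal.ofReal_ne_top), integral_smul_measure, integral_smul_measure,
    ENNReal.toReal_ofReal (sub_nonneg.2 (aSSL_le_one hn h0 h1 x)),
    ENNReal.toReal_ofReal (aSSL_nonneg hn h0 h1 x)]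
  rfl

lemma integral_sum_sq_sub_postSSL (hn : 0 < n) (h0 : 0 ≤ α) (h1 : α ≤ 1) (X m : Fin n → ℝ) :
    ∫ θ, ∑ i, (θ i - m i) ^ 2 ∂postSSL n α X = ∑ i, coordRisk n α (X i) (m i) := by
  have (i : Fin n) := isProbabilityMeasure_coordPostSSL hn h0 h1 (X i)
  have hint (i : Fin n) := integrable_sq_sub_coordPostSSL hn h0 h1 (X i) (m i)
  unfold postSSL
  rw [integral_finsetSum _ fun i _ => integrable_comp_eval (i := i) (hint i)]
  exact Finset.sum_congr rfl fun i _ =>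
    integral_comp_eval (μ := fun i => coordPostSSL n α (X i)) (hint i).aestronglyMeasurable

lemma postSqErr_gamma1_le (x m : ℝ) : postSqErr gamma1 x m ≤ 1146880 + 2 * (x - m) ^ 2 := by
  linarith [isPriorDensity_gamma1.postSqErr_le_recenter x m x, postSqErr_gamma1_self_le x]

lemma postSqErr_gamma0_le (hn : 0 < n) (x m : ℝ) :
    postSqErr (gamma0 n) x m ≤ 36 * (1 + x ^ 2) + 4 * (x - m) ^ 2 := by
  nlinarith [(isPriorDensity_gamma0 hn).postSqErr_le_recenter x m 0,
    postSqErr_gamma0_zero_le hn x, sq_nonneg (2 * x - m)]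

lemma coordRisk_le (hn : 0 < n) (h0 : 0 ≤ α) (h1 : α ≤ 1) (x m : ℝ) :
    coordRisk n α x m
      ≤ 36 * ((1 - aSSL n α x) * (1 + x ^ 2)) + 4 * (x - m) ^ 2 + 1146880 := by
  have ha0 := aSSL_nonneg hn h0 h1 x
  have ha1 := sub_nonneg.2 (aSSL_le_one hn h0 h1 x)
  rw [coordRisk_eq hn h0 h1]
  nlinarith [mul_le_mul_of_nonneg_left (postSqErr_gamma0_le hn x m) ha1,
    mul_le_mul_of_nonneg_left (postSqErr_gamma1_le x m) ha0, mul_nonneg ha0 (sq_nonneg (x - m))]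

lemma coordRisk_zero_le (hn : 0 < n) (h0 : 0 ≤ α) (h1 : α ≤ 1) (x : ℝ) :
    coordRisk n α x 0 ≤ 1200000 * (1 + x ^ 2) := by
  have ha0 := aSSL_nonneg hn h0 h1 x
  nlinarith [coordRisk_le hn h0 h1 x 0, sq_nonneg x]

lemma coordRisk_zero_le_add (hn : 0 < n) (h0 : 0 ≤ α) (h1 : α ≤ 1) (x : ℝ) :
    coordRisk n α x 0
      ≤ 3 * (1 + x ^ 2) ^ 2 / n + 1200000 * (aSSL n α x * (1 + x ^ 2)) := by
  have ha0 := aSSL_nonneg hn h0 h1 x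
  rw [coordRisk_eq hn h0 h1]
  gcongr ?_ + ?_
  · exact (mul_le_of_le_one_left (postSqErr_nonneg _ x 0) (by linarith)).trans
      (postSqErr_gamma0_zero_le_div hn x)
  · rw [mul_left_comm]
    gcongr
    nlinarith [postSqErr_gamma1_le x 0, sq_nonneg x]

lemma coordRisk_le_log_add (hn : 3 ≤ n) (hdom : SlabDominates n) (hα : 1 / n ≤ α) (h1 : α ≤ 1)
    (x m : ℝ) : coordRisk n α x m ≤ 1200000 * (log n + (x - m) ^ 2) := by
  have hn' : 0 < n := by lia
  have hn0 : (0 : ℝ) < n := by positivity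
  have h0 : 0 < α := lt_of_lt_of_le (by positivity) hα
  have hlog := one_le_log_natCast hn
  have hspike : (1 - aSSL n α x) * (1 + x ^ 2) ≤ 1 + 32 * log n := by
    have ha0 := aSSL_nonneg hn' h0.le h1 x
    rcases le_total (x ^ 2) (32 * log n) with hx | hx
    · nlinarith [sq_nonneg x]
    · have hg0 := g0_pos hn' x
      have hg1 := g1_pos x
      have hαg : (1 + x ^ 2) * g0 n x ≤ α * g1 x := by
        rw [div_le_iff₀ hn0] at hα
        have := mul_le_mul_of_nonneg_left (hdom x hx) h0.le
        nlinarith [mul_pos (by positivity : 0 < 1 + x ^ 2) hg0]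
      have hle1 : (1 - aSSL n α x) * (1 + x ^ 2) ≤ 1 := by
        have hm : 0 < mixture (g0 n) g1 α x := mixture_pos hg0 hg1 h0.le h1
        rw [one_sub_aSSL hn' h0.le h1, div_mul_eq_mul_div, div_le_one hm, mixture]
        nlinarith [mul_nonneg h0.le (mul_pos (by positivity : 0 < 1 + x ^ 2) hg0).le]
      linarith
  nlinarith [coordRisk_le hn' h0.le h1 x m, sq_nonneg (x - m)]

end CoordinatePosterior

section NullCoordinate

open ProbabilityTheory

variable {n : ℕ} {α : ℝ}

/-- The level `√(32 log n)` of `SlabDominates`: the posterior slab weight of a pure-noise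
observation is controlled through `aSSL` below it and through the Gaussian tail above it. -/
def slabThreshold (n : ℕ) : ℝ := √(32 * log n)

lemma slabThreshold_nonneg (n : ℕ) : 0 ≤ slabThreshold n := Real.sqrt_nonneg _

lemma slabThreshold_sq (n : ℕ) : slabThreshold n ^ 2 = 32 * log n :=
  Real.sq_sqrt (mul_nonneg (by norm_num) (Real.log_natCast_nonneg n))

lemma one_le_slabThreshold (hn : 3 ≤ n) : 1 ≤ slabThreshold n :=
  Real.one_le_sqrt.2 (by linarith [one_le_log_natCast hn])

lemma le_setIntegral_g1 {t : ℝ} (ht : 1 ≤ t) : 1 / (1600 * t) ≤ ∫ x in Icc t (2 * t), g1 x := by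
  have hbound (x : ℝ) (hx : x ∈ Icc t (2 * t)) : 1 / (1600 * t ^ 2) ≤ g1 x := by
    refine le_trans ?_ (le_g1 x)
    rw [← div_eq_mul_inv, div_div]
    gcongr 1 / ?_
    nlinarith [hx.1, hx.2]
  have hint : IntegrableOn g1 (Icc t (2 * t)) :=
    isPriorDensity_gamma1.integrable_gaussConv.integrableOn
  calc 1 / (1600 * t) = 1 / (1600 * t ^ 2) * volume.real (Icc t (2 * t)) := by
        rw [Real.volume_real_Icc_of_le (by linarith)]
        field_simp
        ring
    _ ≤ _ := setIntegral_ge_of_const_le_real measurableSet_Icc measure_Icc_lt_top.ne hbound hint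

-- The likelihood ratio loses on `[t, 2t]`, `t = slabThreshold n`, where the slab marginal has mass
-- of order `1 / t` and dominates the null density.
lemma integral_mixRatio_null_le (hn : 3 ≤ n) (hdom : SlabDominates n) (hα : 1 / n ≤ α)
    (h1 : α ≤ 1 / 4) : ∫ x, mixRatio (g0 n) g1 α x ∂gaussianReal 0 1
      ≤ exp (1 / n - α / (12800 * slabThreshold n)) := by
  have hn' : 0 < n := by lia
  have hn0 : (0 : ℝ) < n := by exact_mod_cast hn'
  have h0 : 0 < α := lt_of_lt_of_le (by positivity) hα
  set t := slabThreshold n with ht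
  have ht1 : 1 ≤ t := one_le_slabThreshold hn
  have hT (x : ℝ) (hx : x ∈ Icc t (2 * t)) : g0 n x ≤ α * g1 x := by
    have hdom_x : n * ((1 + x ^ 2) * g0 n x) ≤ g1 x :=
      hdom x (by rw [← slabThreshold_sq, ← ht]; nlinarith [hx.1])
    have hg0 := g0_pos hn' x
    rw [div_le_iff₀ hn0] at hα
    calc g0 n x ≤ α * n * ((1 + x ^ 2) * g0 n x) := by
          nlinarith [mul_nonneg (sq_nonneg x) hg0.le]
      _ ≤ α * g1 x := by rw [mul_assoc]; gcongr
  rw [integral_gaussianReal_zero_one]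
  refine (integral_mul_mixRatio_le (g0_pos hn') g1_pos
    (isPriorDensity_gamma0 hn').integral_gaussConv isPriorDensity_gamma1.integral_gaussConv h0 h1
    measurableSet_Icc hT (by positivity) (fun x => (phi_pos x).le) (phi_le_g0 hn')).trans ?_
  gcongr
  calc α / (12800 * t) = α / 8 * (1 / (1600 * t)) := by field_simp; norm_num
    _ ≤ _ := by gcongr; exact le_setIntegral_g1 ht1

/-- The reciprocal of the noise density below the level `t`. It majorizes the slab weight of a
pure-noise observation, up to a factor `α`, and its integral under the noise law is only `2 * t`. -/
def invPhiBelow (t : ℝ) : ℝ → ℝ := (Icc (-t) t).indicator fun x => (phi x)⁻¹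

lemma invPhiBelow_nonneg (t x : ℝ) : 0 ≤ invPhiBelow t x :=
  indicator_nonneg (fun x _ => (inv_pos.2 (phi_pos x)).le) x

lemma phi_mul_invPhiBelow (t : ℝ) :
    (fun x => phi x * invPhiBelow t x) = (Icc (-t) t).indicator fun _ => 1 := by
  ext x
  unfold invPhiBelow
  rw [← indicator_mul_right]
  simp only [mul_inv_cancel₀ (phi_pos _).ne']

lemma integrable_invPhiBelow (t : ℝ) : Integrable (invPhiBelow t) (gaussianReal 0 1) := by
  rw [integrable_gaussianReal_zero_one_iff, phi_mul_invPhiBelow,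
    integrable_indicator_iff measurableSet_Icc]
  exact continuous_const.integrableOn_Icc

lemma integral_invPhiBelow {t : ℝ} (ht : 0 ≤ t) :
    ∫ x, invPhiBelow t x ∂gaussianReal 0 1 = 2 * t := by
  rw [integral_gaussianReal_zero_one, phi_mul_invPhiBelow, integral_indicator measurableSet_Icc,
    setIntegral_const, Real.volume_real_Icc_of_le (by linarith), smul_eq_mul]
  ring

lemma aSSL_mul_one_add_sq_le_inv_phi (hn : 0 < n) (h0 : 0 ≤ α) (h1 : α ≤ 1 / 2) (x : ℝ) :
    aSSL n α x * (1 + x ^ 2) ≤ 448 * α * (phi x)⁻¹ := by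
  have hφ := phi_pos x
  have hg0 : phi x ≤ 2 * g0 n x := by
    refine (phi_le_g0 hn x).trans (mul_le_mul_of_nonneg_right ?_ (g0_pos hn x).le)
    have : (1 : ℝ) / n ≤ 1 := div_le_one_of_le₀ (by exact_mod_cast hn) n.cast_nonneg
    linarith
  have hden : phi x / 4 ≤ (1 - α) * g0 n x + α * g1 x := by
    nlinarith [mul_nonneg h0 (g1_pos x).le, g0_pos hn x]
  calc aSSL n α x * (1 + x ^ 2) ≤ α * (112 * (1 + x ^ 2)⁻¹) / (phi x / 4) * (1 + x ^ 2) := by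
        unfold aSSL; gcongr; exact g1_le x
    _ = 448 * α * (phi x)⁻¹ := by field_simp; ring

lemma one_add_sq_le_exp_div {x : ℝ} (hn : 0 < n) (hx : 32 * log n ≤ x ^ 2) :
    1 + x ^ 2 ≤ 8 * (exp (1 / 4 * x ^ 2) / n) := by
  have hn0 : (0 : ℝ) < n := by exact_mod_cast hn
  have hlarge : (n : ℝ) ≤ exp (1 / 8 * x ^ 2) := by
    rw [← Real.log_le_iff_le_exp hn0]
    linarith [Real.log_natCast_nonneg n]
  rw [mul_div_assoc', le_div_iff₀ hn0]
  calc (1 + x ^ 2) * n ≤ (1 / 8)⁻¹ * exp (1 / 8 * x ^ 2) * exp (1 / 8 * x ^ 2) := by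
        gcongr; exact one_add_sq_le_mul_exp (by norm_num) (by norm_num) x
    _ = 8 * exp (1 / 4 * x ^ 2) := by rw [mul_assoc, ← Real.exp_add]; ring_nf

lemma aSSL_mul_one_add_sq_le (hn : 0 < n) (h0 : 0 ≤ α) (h1 : α ≤ 1 / 2) (x : ℝ) :
    aSSL n α x * (1 + x ^ 2)
      ≤ 8 * (exp (1 / 4 * x ^ 2) / n) + 448 * (α * invPhiBelow (slabThreshold n) x) := by
  by_cases hx : x ∈ Icc (-slabThreshold n) (slabThreshold n)
  · rw [invPhiBelow, indicator_of_mem hx, ← mul_assoc]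
    exact (aSSL_mul_one_add_sq_le_inv_phi hn h0 h1 x).trans (le_add_of_nonneg_left (by positivity))
  · rw [invPhiBelow, indicator_of_notMem hx, mul_zero, mul_zero, add_zero]
    rw [mem_Icc, ← abs_le, not_le] at hx
    have hx2 : 32 * log n ≤ x ^ 2 := by
      rw [← slabThreshold_sq, ← sq_abs x]
      exact pow_le_pow_left₀ (slabThreshold_nonneg n) hx.le 2
    exact (mul_le_of_le_one_left (by positivity) (aSSL_le_one hn h0 (by linarith) x)).trans
      (one_add_sq_le_exp_div hn hx2)

/-- Up to a constant, an upper bound for the posterior risk at `0` of a pure-noise observation when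
the weight is at most `2 * α`. -/
def nullMajorant (n : ℕ) (α x : ℝ) : ℝ :=
  exp (1 / 4 * x ^ 2) / n + 2 * (α * invPhiBelow (slabThreshold n) x)

lemma integrable_nullMajorant (n : ℕ) (α : ℝ) : Integrable (nullMajorant n α) (gaussianReal 0 1) :=
  ((integrable_exp_mul_sq_gaussianReal (by norm_num)).div_const _).add
    (((integrable_invPhiBelow _).const_mul α).const_mul 2)

lemma integral_nullMajorant_le (n : ℕ) (α : ℝ) :
    ∫ x, nullMajorant n α x ∂gaussianReal 0 1 ≤ 2 / n + 4 * (α * slabThreshold n) := by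
  unfold nullMajorant
  rw [integral_add ((integrable_exp_mul_sq_gaussianReal (by norm_num)).div_const _)
    (((integrable_invPhiBelow _).const_mul α).const_mul 2), integral_div, integral_const_mul,
    integral_const_mul, integral_invPhiBelow (slabThreshold_nonneg n)]
  have := div_le_div_of_nonneg_right integral_exp_sq_div_four_gaussianReal_le n.cast_nonneg
  linarith

end NullCoordinate

section PosteriorRisk

open ProbabilityTheory

variable {n s : ℕ} {α β b : ℝ} {X θ0 : Fin n → ℝ} {hahat : (Fin n → ℝ) → ℝ}

instance isProbabilityMeasure_Pdata (θ : Fin n → ℝ) : IsProbabilityMeasure (Pdata n θ) := by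
  unfold Pdata; infer_instance

lemma integrable_comp_eval_Pdata {f : ℝ → ℝ} {i : Fin n}
    (hf : Integrable f (gaussianReal (θ0 i) 1)) :
    Integrable (fun X => f (X i)) (Pdata n θ0) :=
  integrable_comp_eval (μ := fun i => gaussianReal (θ0 i) 1) hf

lemma integral_comp_eval_Pdata {f : ℝ → ℝ} {i : Fin n}
    (hf : Integrable f (gaussianReal (θ0 i) 1)) :
    ∫ X, f (X i) ∂Pdata n θ0 = ∫ x, f x ∂gaussianReal (θ0 i) 1 :=
  integral_comp_eval (μ := fun i => gaussianReal (θ0 i) 1) hf.aestronglyMeasurable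

lemma sum_le_of_mem_ell0 (hθ : θ0 ∈ ell0 n s) {f : Fin n → ℝ} {a : ℝ} (ha : 0 ≤ a) (hb : 0 ≤ b)
    (hsignal : ∀ i, θ0 i ≠ 0 → f i ≤ a) (hnull : ∀ i, θ0 i = 0 → f i ≤ b) :
    ∑ i, f i ≤ s * a + n * b := by
  have hcard : ((Finset.univ.filter fun i => θ0 i ≠ 0).card : ℝ) ≤ s := by
    have hθ' : Nat.card {i // θ0 i ≠ 0} ≤ s := hθ
    rw [Nat.card_eq_fintype_card, Fintype.card_subtype] at hθ'
    exact_mod_cast hθ'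
  calc ∑ i, f i ≤ ∑ i, ((if θ0 i ≠ 0 then a else 0) + b) := by
        refine Finset.sum_le_sum fun i _ => ?_
        split_ifs with hi
        · linarith [hsignal i hi]
        · linarith [hnull i (not_not.1 hi)]
    _ = (Finset.univ.filter fun i => θ0 i ≠ 0).card * a + n * b := by
        rw [Finset.sum_add_distrib, ← Finset.sum_filter, Finset.sum_const, Finset.sum_const,
          Finset.card_univ, Fintype.card_fin, nsmul_eq_mul, nsmul_eq_mul]
    _ ≤ s * a + n * b := by gcongr

lemma integrable_mixRatio (hn : 0 < n) (h0 : 0 ≤ α) (h1 : α ≤ 1 / 2) {μ : Measure ℝ}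
    [IsFiniteMeasure μ] : Integrable (mixRatio (g0 n) g1 α) μ := by
  refine Integrable.of_bound
    (measurable_mixRatio (measurable_g0 hn) measurable_g1 α).aestronglyMeasurable 2
    (ae_of_all _ fun x => ?_)
  rw [Real.norm_eq_abs, abs_of_nonneg (mixRatio_nonneg (g0_pos hn x) (g1_pos x) h0 h1)]
  exact mixRatio_le_two (g0_pos hn x) (g1_pos x) h0 h1

lemma integrable_prod_mixRatio (hn : 0 < n) (h0 : 0 ≤ α) (h1 : α ≤ 1 / 2) :
    Integrable (fun X => ∏ i, mixRatio (g0 n) g1 α (X i)) (Pdata n θ0) :=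
  Integrable.fintype_prod_dep (f := fun _ => mixRatio (g0 n) g1 α)
    fun _ => integrable_mixRatio hn h0 h1

lemma integral_mixRatio_le_two (hn : 0 < n) (h0 : 0 ≤ α) (h1 : α ≤ 1 / 2) {μ : Measure ℝ}
    [IsProbabilityMeasure μ] : ∫ x, mixRatio (g0 n) g1 α x ∂μ ≤ 2 := by
  calc ∫ x, mixRatio (g0 n) g1 α x ∂μ ≤ ∫ _, 2 ∂μ :=
        integral_mono (integrable_mixRatio hn h0 h1) (integrable_const _)
          fun x => mixRatio_le_two (g0_pos hn x) (g1_pos x) h0 h1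
    _ = 2 := by simp only [integral_const, probReal_univ, one_smul]

lemma integral_prod_mixRatio_le (hn : 3 ≤ n) (hdom : SlabDominates n) (hθ : θ0 ∈ ell0 n s)
    (hs : (s : ℝ) ≤ n / 2) (hα : 1 / n ≤ α) (h1 : α ≤ 1 / 4) :
    ∫ X, ∏ i, mixRatio (g0 n) g1 α (X i) ∂Pdata n θ0
      ≤ exp (1 + s - n * α / (25600 * slabThreshold n)) := by
  have hn' : 0 < n := by lia
  have hn0 : (0 : ℝ) < n := by exact_mod_cast hn'
  have h0 : 0 < α := lt_of_lt_of_le (by positivity) hα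
  have ht := one_le_slabThreshold hn
  set c := α / (12800 * slabThreshold n) with hc
  have hc0 : 0 ≤ c := by positivity
  let e : Fin n → ℝ := fun i => if θ0 i = 0 then 1 / n - c else 1
  have hcoord (i : Fin n) : ∫ x, mixRatio (g0 n) g1 α x ∂gaussianReal (θ0 i) 1 ≤ exp (e i) := by
    by_cases hi : θ0 i = 0
    · simp only [e, hi, if_true]
      exact integral_mixRatio_null_le hn hdom hα h1
    · simp only [e, hi, if_false]
      exact (integral_mixRatio_le_two hn' h0.le (by linarith)).trans
        (by linarith [Real.add_one_le_exp 1])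
  have hsum : ∑ i, (e i + c) ≤ s * (1 + c) + n * (1 / n) :=
    sum_le_of_mem_ell0 hθ (by positivity) (by positivity)
      (fun i hi => by simp only [e, hi, if_false, le_refl])
      (fun i hi => by simp only [e, hi, if_true, sub_add_cancel, le_refl])
  rw [Finset.sum_add_distrib, Finset.sum_const, Finset.card_univ, Fintype.card_fin, nsmul_eq_mul,
    mul_one_div_cancel hn0.ne'] at hsum
  calc ∫ X, ∏ i, mixRatio (g0 n) g1 α (X i) ∂Pdata n θ0
      = ∏ i, ∫ x, mixRatio (g0 n) g1 α x ∂gaussianReal (θ0 i) 1 :=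
        integral_fintype_prod_eq_prod (E := fun _ : Fin n => ℝ) fun _ => mixRatio (g0 n) g1 α
    _ ≤ ∏ i, exp (e i) := Finset.prod_le_prod (fun i _ => integral_nonneg fun x =>
        mixRatio_nonneg (g0_pos hn' x) (g1_pos x) h0.le (by linarith)) fun i _ => hcoord i
    _ = exp (∑ i, e i) := (Real.exp_sum _ _).symm
    _ ≤ exp (1 + s - n * c / 2) := exp_le_exp.2 (by nlinarith)
    _ = exp (1 + s - n * α / (25600 * slabThreshold n)) := by
        rw [hc]; congr 2; field_simp; norm_num

-- Either the estimated weight `β` is at most `2 * α`, so that the slab is hardly ever selected, or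
-- the likelihood prefers `2 * α` to `α`, which makes the product of likelihood ratios at least `1`.
lemma coordRisk_zero_le_of_logMargSSL_le (hn : 0 < n) (h0 : 0 < α) (h1 : α ≤ 1 / 4) (hβ0 : 0 ≤ β)
    (hβ1 : β ≤ 1) (hle : logMargSSL α X ≤ logMargSSL β X) (i : Fin n) :
    coordRisk n β (X i) 0
      ≤ 10 ^ 9 * (nullMajorant n α (X i) + n * ∏ j, mixRatio (g0 n) g1 α (X j)) := by
  rw [nullMajorant]
  have hn0 : (0 : ℝ) < n := by exact_mod_cast hn
  have hE : 0 ≤ exp (1 / 4 * X i ^ 2) / n := by positivity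
  have hinv := invPhiBelow_nonneg (slabThreshold n) (X i)
  have hαinv := mul_nonneg h0.le hinv
  have hprod : 0 ≤ ∏ j, mixRatio (g0 n) g1 α (X j) := Finset.prod_nonneg fun j _ =>
    mixRatio_nonneg (g0_pos hn _) (g1_pos _) h0.le (by linarith)
  have hnprod := mul_nonneg hn0.le hprod
  have hquartic : (1 + X i ^ 2) ^ 2 / n ≤ 64 * (exp (1 / 4 * X i ^ 2) / n) := by
    rw [mul_div_assoc']
    gcongr
    exact sq_one_add_sq_le_exp _
  rcases le_total β (2 * α) with hβ | hβ
  · have hslab := aSSL_mul_one_add_sq_le hn hβ0 (by linarith) (X i)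
    have hβinv := mul_le_mul_of_nonneg_right hβ hinv
    have hrisk := coordRisk_zero_le_add hn hβ0 hβ1 (X i)
    rw [mul_div_assoc] at hrisk
    linarith
  · have hone : 1 ≤ ∏ j, mixRatio (g0 n) g1 α (X j) :=
      one_le_prod_mixRatio (g0_pos hn) g1_pos h0 hβ hβ1 hle
    have hamgm : 1 + X i ^ 2 ≤ (1 + X i ^ 2) ^ 2 / n + n := by
      rw [div_add' _ _ _ hn0.ne', le_div_iff₀ hn0]
      nlinarith [sq_nonneg (1 + X i ^ 2 - n)]
    have hnone := mul_le_mul_of_nonneg_left hone hn0.le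
    linarith [coordRisk_zero_le hn hβ0 hβ1 (X i)]

lemma postRiskSSL_le_sum_integral (hn : 0 < n) (hhahat : ∀ X, hahat X ∈ Icc 0 1)
    {M : Fin n → (Fin n → ℝ) → ℝ} (hMint : ∀ i, Integrable (M i) (Pdata n θ0))
    (hM : ∀ i X, coordRisk n (hahat X) (X i) (θ0 i) ≤ M i X) :
    postRiskSSL hahat θ0 ≤ ∑ i, ∫ X, M i X ∂Pdata n θ0 := by
  rw [postRiskSSL, ← integral_finsetSum _ fun i _ => hMint i]
  refine integral_mono_of_nonneg (ae_of_all _ fun X => ?_)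
    (integrable_finsetSum _ fun i _ => hMint i) (ae_of_all _ fun X => ?_)
  · exact integral_nonneg fun θ => Finset.sum_nonneg fun i _ => sq_nonneg _
  · simp only
    rw [integral_sum_sq_sub_postSSL hn (hhahat X).1 (hhahat X).2]
    exact Finset.sum_le_sum fun i _ => hM i X

lemma postRiskSSL_le_of_null (hn : 3 ≤ n) (hdom : SlabDominates n)
    (hhahat : ∀ X, hahat X ∈ Icc (1 / (n : ℝ)) 1) (hθ : θ0 ∈ ell0 n s) (hb : 0 ≤ b)
    {M : Fin n → (Fin n → ℝ) → ℝ} (hMint : ∀ i, θ0 i = 0 → Integrable (M i) (Pdata n θ0))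
    (hMb : ∀ i, θ0 i = 0 → ∫ X, M i X ∂Pdata n θ0 ≤ b)
    (hM : ∀ i, θ0 i = 0 → ∀ X, coordRisk n (hahat X) (X i) 0 ≤ M i X) :
    postRiskSSL hahat θ0 ≤ 2400000 * (s * log n) + n * b := by
  have hlog := one_le_log_natCast hn
  let S : Fin n → ℝ → ℝ := fun i x => 1200000 * (log n + (x - θ0 i) ^ 2)
  have hSint (i : Fin n) : Integrable (S i) (gaussianReal (θ0 i) 1) :=
    ((integrable_const _).add (integrable_sq_sub_mean_gaussianReal _)).const_mul _
  have hS (i : Fin n) : ∫ X, S i (X i) ∂Pdata n θ0 ≤ 2400000 * log n := by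
    rw [integral_comp_eval_Pdata (hSint i), integral_const_mul,
      integral_add (integrable_const _) (integrable_sq_sub_mean_gaussianReal _),
      integral_sq_sub_mean_gaussianReal, integral_const, probReal_univ, one_smul]
    linarith
  let N : Fin n → (Fin n → ℝ) → ℝ := fun i X => if θ0 i = 0 then M i X else S i (X i)
  have hNnull {i : Fin n} (hi : θ0 i = 0) : N i = M i := by ext X; simp only [N, hi, if_true]
  have hNsignal {i : Fin n} (hi : θ0 i ≠ 0) : N i = fun X => S i (X i) := by
    ext X; simp only [N, hi, if_false]
  have hNint (i : Fin n) : Integrable (N i) (Pdata n θ0) := by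
    by_cases hi : θ0 i = 0
    · exact hNnull hi ▸ hMint i hi
    · exact hNsignal hi ▸ integrable_comp_eval_Pdata (hSint i)
  have hrisk (i : Fin n) (X : Fin n → ℝ) : coordRisk n (hahat X) (X i) (θ0 i) ≤ N i X := by
    by_cases hi : θ0 i = 0
    · rw [hNnull hi, hi]
      exact hM i hi X
    · rw [hNsignal hi]
      exact coordRisk_le_log_add hn hdom (hhahat X).1 (hhahat X).2 _ _
  calc postRiskSSL hahat θ0 ≤ ∑ i, ∫ X, N i X ∂Pdata n θ0 :=
        postRiskSSL_le_sum_integral (by lia)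
          (fun X => ⟨le_trans (by positivity) (hhahat X).1, (hhahat X).2⟩) hNint hrisk
    _ ≤ s * (2400000 * log n) + n * b := sum_le_of_mem_ell0 hθ (by positivity) hb
        (fun i hi => hNsignal hi ▸ hS i) fun i hi => hNnull hi ▸ hMb i hi
    _ = 2400000 * (s * log n) + n * b := by ring

end PosteriorRisk

section Conclusion

open ProbabilityTheory Filter

variable {n s : ℕ} {θ0 : Fin n → ℝ} {hahat : (Fin n → ℝ) → ℝ} {Ccal α : ℝ}

lemma postRiskSSL_le_add (hn : 3 ≤ n) (hdom : SlabDominates n)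
    (hhahat : ∀ X, hahat X ∈ Icc (1 / (n : ℝ)) 1) (hθ : θ0 ∈ ell0 n s) :
    postRiskSSL hahat θ0 ≤ 2400000 * (s * log n) + 2400000 * n := by
  let W : ℝ → ℝ := fun x => 1200000 * (1 + (x - 0) ^ 2)
  have hW : Integrable W (gaussianReal 0 1) :=
    ((integrable_const _).add (integrable_sq_sub_mean_gaussianReal _)).const_mul _
  have hWone : ∫ x, W x ∂gaussianReal 0 1 = 2400000 := by
    rw [integral_const_mul, integral_add (integrable_const _)
      (integrable_sq_sub_mean_gaussianReal _), integral_sq_sub_mean_gaussianReal, integral_const,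
      probReal_univ, one_smul]
    norm_num
  have hWi {i : Fin n} (hi : θ0 i = 0) : Integrable W (gaussianReal (θ0 i) 1) := by rwa [hi]
  rw [mul_comm 2400000 (n : ℝ)]
  refine postRiskSSL_le_of_null hn hdom hhahat hθ (by norm_num) (M := fun i X => W (X i))
    (fun i hi => integrable_comp_eval_Pdata (hWi hi))
    (fun i hi => by rw [integral_comp_eval_Pdata (hWi hi), hi, hWone]) fun i _ X => ?_
  simp only [W, sub_zero]
  exact coordRisk_zero_le (by lia) (le_trans (by positivity) (hhahat X).1) (hhahat X).2 _

lemma postRiskSSL_le_of_weight (hn : 3 ≤ n) (hdom : SlabDominates n)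
    (hhahat : ∀ X, hahat X ∈ Icc (1 / (n : ℝ)) 1) (hθ : θ0 ∈ ell0 n s) (hs : (s : ℝ) ≤ n / 2)
    (hα : 1 / n ≤ α) (h1 : α ≤ 1 / 4)
    (hmax : ∀ X : Fin n → ℝ, logMargSSL α X ≤ logMargSSL (hahat X) X) :
    postRiskSSL hahat θ0 ≤ 2400000 * (s * log n)
      + 10 ^ 9 * (2 + 4 * (n * α * slabThreshold n)
        + n ^ 2 * exp (1 + s - n * α / (25600 * slabThreshold n))) := by
  have hn' : 0 < n := by lia
  have hn0 : (0 : ℝ) < n := by exact_mod_cast hn'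
  have h0 : 0 < α := (one_div_pos.2 hn0).trans_le hα
  have ht := slabThreshold_nonneg n
  set t := slabThreshold n
  set ρ := exp (1 + s - n * α / (25600 * t))
  let R : (Fin n → ℝ) → ℝ := fun X => n * ∏ j, mixRatio (g0 n) g1 α (X j)
  have hW {i : Fin n} (hi : θ0 i = 0) : Integrable (nullMajorant n α) (gaussianReal (θ0 i) 1) :=
    hi.symm ▸ integrable_nullMajorant n α
  have hR : Integrable R (Pdata n θ0) :=
    (integrable_prod_mixRatio hn' h0.le (by linarith)).const_mul _
  have hRint : ∫ X, R X ∂Pdata n θ0 ≤ n * ρ := by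
    rw [integral_const_mul]
    gcongr
    exact integral_prod_mixRatio_le hn hdom hθ hs hα h1
  have hnull : postRiskSSL hahat θ0
      ≤ 2400000 * (s * log n) + n * (10 ^ 9 * (2 / n + 4 * (α * t) + n * ρ)) := by
    refine postRiskSSL_le_of_null hn hdom hhahat hθ (by positivity)
      (M := fun i X => 10 ^ 9 * (nullMajorant n α (X i) + R X))
      (fun i hi => ((integrable_comp_eval_Pdata (hW hi)).add hR).const_mul _)
      (fun i hi => ?_) fun i _ X => ?_
    · rw [integral_const_mul, integral_add (integrable_comp_eval_Pdata (hW hi)) hR,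
        integral_comp_eval_Pdata (hW hi), hi]
      gcongr
      exact integral_nullMajorant_le n α
    · exact coordRisk_zero_le_of_logMargSSL_le hn' h0 h1
        (le_trans (by positivity) (hhahat X).1) (hhahat X).2 (hmax X) i
  refine hnull.trans_eq ?_
  field_simp

-- The weight `α = 51200 * t * (s + log n) / n`, `t = slabThreshold n`, is large enough for the
-- product of likelihood ratios to have mean `O(n⁻²)`, and makes `n * α * t` of the target order.
lemma postRiskSSL_le_of_mul_log_le (hn : 3 ≤ n) (hdom : SlabDominates n)
    (ht : 204800 * slabThreshold n ≤ log n) (hCt : Ccal ≤ slabThreshold n)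
    (hC1 : 1 ≤ Ccal * log n) (hmmle : IsMMLESSL Ccal hahat) (hθ : θ0 ∈ ell0 n s)
    (hsparse : (s + log n) * log n ≤ n) :
    postRiskSSL hahat θ0 ≤ 10 ^ 16 * ((s + log n) * log n) := by
  have hn0 : (0 : ℝ) < n := by positivity
  have hlog := one_le_log_natCast hn
  have ht1 := one_le_slabThreshold hn
  have hs0 : (0 : ℝ) ≤ s := s.cast_nonneg
  have htsq := slabThreshold_sq n
  set t := slabThreshold n
  set α := 51200 * t * (s + log n) / n with hα
  have hnα : n * α = 51200 * t * (s + log n) := mul_div_cancel₀ _ hn0.ne'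
  have hCα : Ccal * log n / n ≤ α := by
    rw [hα]
    gcongr <;> linarith
  have hα1 : α ≤ 1 / 4 := by
    rw [hα, div_le_iff₀ hn0]
    nlinarith
  have hCn : 1 / n ≤ Ccal * log n / n := by gcongr
  have hexp : n ^ 2 * exp (1 + s - n * α / (25600 * t)) ≤ 3 := by
    have hexponent : 1 + s - n * α / (25600 * t) ≤ 1 - 2 * log n := by
      rw [hnα, show 51200 * t * (s + log n) / (25600 * t) = 2 * (s + log n) by field_simp; norm_num]
      linarith
    calc n ^ 2 * exp (1 + s - n * α / (25600 * t)) ≤ n ^ 2 * exp (1 - 2 * log n) := by gcongr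
      _ = exp 1 := by
          rw [Real.exp_sub, mul_comm 2, Real.exp_mul, Real.exp_log hn0]
          norm_cast
          field_simp
      _ ≤ 3 := Real.exp_one_lt_three.le
  have hrisk := postRiskSSL_le_of_weight hn hdom
    (fun X => ⟨hCn.trans (hmmle.2 X).1.1, (hmmle.2 X).1.2⟩) hθ (by nlinarith) (hCn.trans hCα) hα1
    fun X => (hmmle.2 X).2 α ⟨hCα, by linarith⟩
  have hnαt : n * α * t = 1638400 * ((s + log n) * log n) := by
    rw [hnα]
    linear_combination 51200 * (s + log n) * htsq
  rw [hnαt] at hrisk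
  nlinarith [mul_nonneg hs0 (by linarith : 0 ≤ log n)]

lemma tendsto_slabThreshold : Tendsto slabThreshold atTop atTop :=
  Real.tendsto_sqrt_atTop.comp
    ((Real.tendsto_log_atTop.comp tendsto_natCast_atTop_atTop).const_mul_atTop (by norm_num))

lemma eventually_slabThreshold_le_log : ∀ᶠ n : ℕ in atTop, 204800 * slabThreshold n ≤ log n := by
  filter_upwards [tendsto_slabThreshold.eventually_ge_atTop (32 * 204800)] with n hn
  nlinarith [slabThreshold_sq n]

theorem ssl_near_optimal_rate_general {Ccal : ℝ} (hC : 0 < Ccal) :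
    ∀ᶠ n : ℕ in atTop, ∀ (s : ℕ) (hahat : (Fin n → ℝ) → ℝ), IsMMLESSL Ccal hahat →
      ∀ θ0 ∈ ell0 n s, postRiskSSL hahat θ0 ≤ 10 ^ 16 * ((s + log n) * log n) := by
  have hlogC : ∀ᶠ n : ℕ in atTop, Ccal⁻¹ ≤ log n :=
    (Real.tendsto_log_atTop.comp tendsto_natCast_atTop_atTop).eventually_ge_atTop _
  filter_upwards [eventually_ge_atTop 3, eventually_slabDominates, eventually_slabThreshold_le_log,
    tendsto_slabThreshold.eventually_ge_atTop Ccal, hlogC]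
    with n hn hdom ht hCt hlogC s hahat hmmle θ0 hθ
  have hC1 : 1 ≤ Ccal * log n := (inv_le_iff_one_le_mul₀' hC).1 hlogC
  rcases le_total ((s + log n) * log n) n with hsparse | hdense
  · exact postRiskSSL_le_of_mul_log_le hn hdom ht hCt hC1 hmmle hθ hsparse
  · have hlog := one_le_log_natCast hn
    have hCn : 1 / n ≤ Ccal * log n / n := by gcongr
    have hrisk := postRiskSSL_le_add hn hdom
      (fun X => ⟨hCn.trans (hmmle.2 X).1.1, (hmmle.2 X).1.2⟩) hθ
    nlinarith [mul_nonneg (s.cast_nonneg : (0 : ℝ) ≤ s) (zero_le_one.trans hlog)]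

end Conclusion

/-- Theorem 4: near-optimal rate for the EB spike and slab
LASSO with Cauchy slab.  For a large enough constant `𝒞` in the maximisation
interval, there exist `C, N₀, c₀, c₁ > 0` such that for `n ≥ N₀` and
`c₁ log² n ≤ s ≤ c₀ n` the posterior squared `L²`-moment is at most
`C s log n` uniformly over `ℓ₀[s]`; assuming only `s ≤ c₀ n` the bound
`C (s log n + log³ n)` holds. -/
theorem ssl_near_optimal_rate :
    ∃ Ccal > (0 : ℝ), ∃ C > (0 : ℝ), ∃ N0 : ℕ, 0 < N0 ∧ ∃ c0 > (0 : ℝ), ∃ c1 > (0 : ℝ),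
      ∀ n : ℕ, N0 ≤ n → ∀ s : ℕ, (s : ℝ) ≤ c0 * n →
      ∀ hahat : (Fin n → ℝ) → ℝ, IsMMLESSL Ccal hahat →
      ∀ θ0 ∈ ell0 n s,
        (c1 * (Real.log n) ^ 2 ≤ (s : ℝ) →
          postRiskSSL hahat θ0 ≤ C * (s * Real.log n)) ∧
        postRiskSSL hahat θ0 ≤ C * (s * Real.log n + (Real.log n) ^ 3) := by
  obtain ⟨N, hN⟩ := Filter.eventually_atTop.1 (ssl_near_optimal_rate_general one_pos)
  refine ⟨1, one_pos, 2 * 10 ^ 16, by norm_num, max N 3, by positivity, 1, one_pos, 1, one_pos,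
    fun n hn s _ hahat hmmle θ0 hθ => ?_⟩
  have hrisk := hN n (le_of_max_le_left hn) s hahat hmmle θ0 hθ
  have hlog := one_le_log_natCast (le_of_max_le_right hn)
  have hs : (0 : ℝ) ≤ s * log n := by positivity
  refine ⟨fun hlarge => ?_, ?_⟩
  · have hsq : log n ^ 2 ≤ s * log n := by nlinarith
    nlinarith
  · have hcube : log n ^ 2 ≤ log n ^ 3 := pow_le_pow_right₀ hlog (by norm_num)
    nlinarith

end
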